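/- arXiv:1812.07473 — 2 statements merged into one kernel-verified Lean document; each statement's English description precedes it below -/
import Mathlib

section
/- For each m ∈ ℕ there is a constant c(m) > 0 such that for all d, n ∈ ℕ and every F ∈ 𝔉_d^s one has sup over k ∈ ℕ with k ≤ √n of ρ_m(F^n, F^{n+k}) ≤ c(m) · n^{−1/2}. -/
open MeasureTheory RealInnerProductSpace
open scoped ENNReal

noncomputable section

abbrev Euc (d : ℕ) := EuclideanSpace ℝ (Fin d)

/-- Convolution of two measures on an additive structure. -/
def mconv {α : Type*} [MeasurableSpace α] [Add α] (μ ν : Measure α) : Measure α :=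
  (μ.prod ν).map (fun p => p.1 + p.2)

/-- Convolution power `μ^{*n}`, with `μ^{*0}` the Dirac measure at `0`. -/
def convPow {α : Type*} [MeasurableSpace α] [AddMonoid α] (μ : Measure α) : ℕ → Measure α
  | 0 => Measure.dirac 0
  | n + 1 => mconv (convPow μ n) μ

/-- Convolution product of a finite family of measures. -/
def convProd {α : Type*} [MeasurableSpace α] [AddMonoid α] :
    ∀ {n : ℕ}, (Fin n → Measure α) → Measure α
  | 0, _ => Measure.dirac 0
  | n + 1, G => mconv (convProd (fun i : Fin n => G i.castSucc)) (G (Fin.last n))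

/-- The compound Poisson measure `e(a·μ) = e^{-a} ∑_k a^k μ^{*k}/k!`. -/
def cpois {α : Type*} [MeasurableSpace α] [AddMonoid α] (a : ℝ) (μ : Measure α) : Measure α :=
  Measure.sum fun k : ℕ =>
    (ENNReal.ofReal (Real.exp (-a) * a ^ k / k.factorial)) • convPow μ k

/-- A measure is symmetric if it is invariant under `x ↦ -x`. -/
def IsSymmMeasure {d : ℕ} (μ : Measure (Euc d)) : Prop :=
  μ.map (fun x => -x) = μ

/-- Characteristic function of a measure on `ℝ^d`. -/
def charFn {d : ℕ} (μ : Measure (Euc d)) (t : Euc d) : ℂ :=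
  ∫ x, Complex.exp ((⟪t, x⟫ : ℂ) * Complex.I) ∂μ

/-- Characteristic function of a measure on `ℝ`. -/
def charFn1 (μ : Measure ℝ) (t : ℝ) : ℂ :=
  ∫ x, Complex.exp (((t * x : ℝ) : ℂ) * Complex.I) ∂μ

/-- Convex polyhedra determined by the directions `t 1, …, t m`. -/
def polyhedraOn {d m : ℕ} (t : Fin m → Euc d) : Set (Set (Euc d)) :=
  {X | ∃ a b : Fin m → EReal,
    X = {x | ∀ j, a j ≤ ((⟪x, t j⟫ : ℝ) : EReal) ∧ ((⟪x, t j⟫ : ℝ) : EReal) ≤ b j}}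

/-- The collection `𝔛_m` of convex polyhedra determined by `m` pairs of parallel hyperplanes. -/
def polyhedra (d m : ℕ) : Set (Set (Euc d)) :=
  {X | ∃ t : Fin m → Euc d, X ∈ polyhedraOn t}

/-- The distance `ρ_m(G,H) = sup_{X ∈ 𝔛_m} |G{X} - H{X}|`. -/
def rhoPoly {d : ℕ} (m : ℕ) (G H : Measure (Euc d)) : ℝ :=
  ⨆ X ∈ polyhedra d m, |(G X).toReal - (H X).toReal|

/-- The Lévy concentration function `Q(μ, b) = sup_x μ[x, x+b]`. -/
def concFn (μ : Measure ℝ) (b : ℝ) : ℝ :=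
  ⨆ x : ℝ, (μ (Set.Icc x (x + b))).toReal

/-- `q(H, X) = inf_{‖t‖=1} Q(𝓛(⟨ξ,t⟩), λ{⟨x,t⟩ : x ∈ X})` where `H = 𝓛(ξ)`. -/
def qFn {d : ℕ} (H : Measure (Euc d)) (X : Set (Euc d)) : ℝ :=
  ⨅ t ∈ {t : Euc d | ‖t‖ = 1},
    concFn (H.map fun x => ⟪x, t⟫) (volume ((fun x => ⟪x, t⟫) '' X)).toReal

/-- The uniform (Kolmogorov) distance on `ℝ^d`. -/
def kolmDist {d : ℕ} (G H : Measure (Euc d)) : ℝ :=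
  ⨆ x : Euc d, |(G {y | ∀ i, y i ≤ x i}).toReal - (H {y | ∀ i, y i ≤ x i}).toReal|

/-- The uniform (Kolmogorov) distance on `ℝ`. -/
def kolmDist1 (G H : Measure ℝ) : ℝ :=
  ⨆ x : ℝ, |(G (Set.Iic x)).toReal - (H (Set.Iic x)).toReal|

end

namespace S12

set_option linter.unusedSectionVars false

section walsh

lemma le_of_sq_le_sq' {a b : ℝ} (h : a ^ 2 ≤ b ^ 2) (hb : 0 ≤ b) : a ≤ b :=
  le_of_abs_le ((sq_le_sq.1 h).trans_eq (abs_of_nonneg hb))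

variable {ι : Type} [DecidableEq ι]

/-- sign of coordinate `i` at the cube point `x`. -/
noncomputable def sg (x : Finset ι) (i : ι) : ℝ := if i ∈ x then -1 else 1

/-- Walsh characters. -/
noncomputable def chi (S x : Finset ι) : ℝ := ∏ i ∈ S, sg x i

lemma chi_eq (S x : Finset ι) : chi S x = (-1) ^ (S ∩ x).card := by
  unfold chi sg
  rw [Finset.prod_ite, Finset.prod_const, Finset.prod_const_one, mul_one, Finset.filter_mem_eq_inter]

lemma chi_comm (S x : Finset ι) : chi S x = chi x S := by
  rw [chi_eq, chi_eq, Finset.inter_comm]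

lemma sg_mul_self (x : Finset ι) (i : ι) : sg x i * sg x i = 1 := by
  unfold sg; split_ifs <;> norm_num

lemma sg_symmDiff (x D : Finset ι) (i : ι) : sg (symmDiff x D) i = sg x i * sg D i := by
  unfold sg
  by_cases h1 : i ∈ x <;> by_cases h2 : i ∈ D <;> simp [Finset.mem_symmDiff, h1, h2]

lemma chi_symmDiff (S x D : Finset ι) : chi S (symmDiff x D) = chi S x * chi S D := by
  unfold chi
  rw [← Finset.prod_mul_distrib]
  exact Finset.prod_congr rfl fun i _ => sg_symmDiff x D i

lemma chi_mul_self (S x : Finset ι) : chi S x * chi S x = 1 := by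
  unfold chi
  rw [← Finset.prod_mul_distrib]
  exact Finset.prod_eq_one fun i _ => sg_mul_self x i

lemma abs_chi (S x : Finset ι) : |chi S x| = 1 := by
  rw [chi_eq, abs_pow]; simp

lemma chi_insert_left {a : ι} {S : Finset ι} (h : a ∉ S) (x : Finset ι) :
    chi (insert a S) x = sg x a * chi S x := by
  unfold chi; rw [Finset.prod_insert h]

lemma chi_insert_right {a : ι} {S : Finset ι} (h : a ∉ S) (x : Finset ι) :
    chi S (insert a x) = chi S x := by
  rw [chi_eq, chi_eq, Finset.inter_insert_of_notMem h]

/-- Bonami lemma, (2,4) hypercontractivity with noise 1/2. -/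
lemma bonami (U : Finset ι) : ∀ c : Finset ι → ℝ,
    ∑ x ∈ U.powerset, (∑ S ∈ U.powerset, (1/2 : ℝ) ^ S.card * c S * chi S x) ^ 4
      ≤ 2 ^ U.card * (∑ S ∈ U.powerset, c S ^ 2) ^ 2 := by
  induction U using Finset.induction_on with
  | empty => intro c; simp [chi]; apply le_of_eq; ring
  | insert a U ha ih =>
    intro c
    have hm : ∀ S ∈ U.powerset, a ∉ S := fun S hS h => ha (Finset.mem_powerset.1 hS h)
    set P : Finset ι → ℝ := fun x => ∑ S ∈ U.powerset, (1/2 : ℝ) ^ S.card * c S * chi S x with hP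
    set Q : Finset ι → ℝ :=
      fun x => ∑ S ∈ U.powerset, (1/2 : ℝ) ^ S.card * c (insert a S) * chi S x with hQ
    have e1 : ∀ x ∈ U.powerset, ∑ S ∈ (insert a U).powerset, (1/2 : ℝ) ^ S.card * c S * chi S x
        = P x + Q x / 2 := by
      intro x hx
      rw [Finset.sum_powerset_insert ha, hP, hQ]
      congr 1
      rw [Finset.sum_div]
      refine Finset.sum_congr rfl fun S hS => ?_
      rw [chi_insert_left (hm S hS), Finset.card_insert_of_notMem (hm S hS)]
      have : sg x a = 1 := by unfold sg; rw [if_neg (hm x hx)]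
      rw [this]; ring
    have e2 : ∀ x ∈ U.powerset,
        ∑ S ∈ (insert a U).powerset, (1/2 : ℝ) ^ S.card * c S * chi S (insert a x)
        = P x - Q x / 2 := by
      intro x hx
      rw [Finset.sum_powerset_insert ha, hP, hQ, sub_eq_add_neg]
      congr 1
      · exact Finset.sum_congr rfl fun S hS => by rw [chi_insert_right (hm S hS)]
      rw [Finset.sum_div, ← Finset.sum_neg_distrib]
      refine Finset.sum_congr rfl fun S hS => ?_
      rw [chi_insert_left (hm S hS), Finset.card_insert_of_notMem (hm S hS),
        chi_insert_right (hm S hS)]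
      have : sg (insert a x) a = -1 := by unfold sg; simp
      rw [this]; ring
    have e0 : ∑ x ∈ (insert a U).powerset,
        (∑ S ∈ (insert a U).powerset, (1/2 : ℝ) ^ S.card * c S * chi S x) ^ 4
        = ∑ x ∈ U.powerset, ((P x + Q x / 2) ^ 4 + (P x - Q x / 2) ^ 4) := by
      rw [Finset.sum_powerset_insert ha, ← Finset.sum_add_distrib]
      exact Finset.sum_congr rfl fun x hx => by rw [e1 x hx, e2 x hx]
    rw [e0, Finset.sum_powerset_insert ha, Finset.card_insert_of_notMem ha]
    have hA := ih c
    have hB := ih (fun S => c (insert a S))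
    change ∑ x ∈ U.powerset, P x ^ 4 ≤ _ at hA
    change ∑ x ∈ U.powerset, Q x ^ 4 ≤ _ at hB
    set A := ∑ S ∈ U.powerset, c S ^ 2
    set B := ∑ S ∈ U.powerset, c (insert a S) ^ 2
    have hA0 : 0 ≤ A := Finset.sum_nonneg fun _ _ => sq_nonneg _
    have hB0 : 0 ≤ B := Finset.sum_nonneg fun _ _ => sq_nonneg _
    set t : ℝ := 2 ^ U.card
    have ht : 0 < t := by positivity
    set p := ∑ x ∈ U.powerset, P x ^ 4
    set q := ∑ x ∈ U.powerset, Q x ^ 4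
    set r := ∑ x ∈ U.powerset, P x ^ 2 * Q x ^ 2
    have hr : r ^ 2 ≤ p * q := by
      have := Finset.sum_mul_sq_le_sq_mul_sq U.powerset (fun x => P x ^ 2) (fun x => Q x ^ 2)
      simpa only [← pow_mul] using this
    have hp0 : 0 ≤ p := Finset.sum_nonneg fun x _ => by positivity
    have hq0 : 0 ≤ q := Finset.sum_nonneg fun x _ => by positivity
    have hr' : r ≤ t * (A * B) := by
      apply le_of_sq_le_sq' _ (by positivity)
      calc r ^ 2 ≤ p * q := hr
        _ ≤ (t * A ^ 2) * (t * B ^ 2) := by gcongr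
        _ = _ := by ring
    have e3 : ∑ x ∈ U.powerset, ((P x + Q x / 2) ^ 4 + (P x - Q x / 2) ^ 4)
        = 2 * p + 3 * r + q / 8 := by
      simp only [p, q, r, Finset.mul_sum, Finset.sum_div, ← Finset.sum_add_distrib]
      exact Finset.sum_congr rfl fun x _ => by ring
    rw [e3, pow_succ]
    nlinarith [mul_nonneg hA0 hB0, mul_nonneg ht.le (mul_nonneg hA0 hB0), mul_nonneg ht.le (sq_nonneg B)]

variable [Fintype ι]

lemma sum_chi_chi (x y : Finset ι) :
    ∑ S : Finset ι, chi S x * chi S y = if x = y then (2 : ℝ) ^ Fintype.card ι else 0 := by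
  have h : ∀ S : Finset ι, chi S x * chi S y = ∏ i ∈ S, (sg x i * sg y i) := by
    intro S; unfold chi; rw [Finset.prod_mul_distrib]
  simp_rw [h]
  rw [← Finset.powerset_univ, ← Finset.prod_one_add]
  split_ifs with hxy
  · subst hxy
    simp only [sg_mul_self]
    rw [Finset.prod_const, Finset.card_univ]; norm_num
  · have : ∃ i, ¬ (i ∈ x ↔ i ∈ y) := by
      by_contra hc; push Not at hc; exact hxy (Finset.ext hc)
    obtain ⟨i, hi⟩ := this
    apply Finset.prod_eq_zero (Finset.mem_univ i)
    unfold sg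
    by_cases h1 : i ∈ x <;> by_cases h2 : i ∈ y <;> simp_all

/-- Walsh coefficients. -/
noncomputable def hat (g : Finset ι → ℝ) (S : Finset ι) : ℝ :=
  (∑ x, g x * chi S x) / 2 ^ Fintype.card ι

lemma inversion (g : Finset ι → ℝ) (x : Finset ι) : g x = ∑ S, hat g S * chi S x := by
  unfold hat
  simp_rw [div_mul_eq_mul_div, Finset.sum_mul, ← Finset.sum_div]
  rw [Finset.sum_comm]
  simp_rw [mul_assoc, ← Finset.mul_sum, sum_chi_chi]
  simp

lemma plancherel (g h : Finset ι → ℝ) :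
    ∑ S, hat g S * hat h S = (∑ x, g x * h x) / 2 ^ Fintype.card ι := by
  have : ∀ x, g x * h x = ∑ S, g x * (hat h S * chi S x) := by
    intro x; rw [← Finset.mul_sum, ← inversion]
  simp_rw [this]
  rw [Finset.sum_comm, Finset.sum_div]
  refine Finset.sum_congr rfl fun S _ => ?_
  unfold hat
  rw [div_mul_eq_mul_div, Finset.sum_mul]
  congr 1
  exact Finset.sum_congr rfl fun x _ => by ring

lemma hat_compl (g : Finset ι → ℝ) (S : Finset ι) :
    hat g Sᶜ = hat (fun x => g x * chi Finset.univ x) S := by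
  unfold hat
  congr 1
  refine Finset.sum_congr rfl fun x _ => ?_
  have : chi (Finset.univ : Finset ι) x = chi S x * chi Sᶜ x := by
    unfold chi; rw [Finset.prod_mul_prod_compl]
  have h2 := chi_mul_self S x
  simp only [this]
  linear_combination (-(g x * chi Sᶜ x)) * h2

/-- normalised counting measure -/
noncomputable def mu (I : Finset (Finset ι)) : ℝ := I.card / 2 ^ Fintype.card ι

lemma mu_nonneg (I : Finset (Finset ι)) : 0 ≤ mu I := by unfold mu; positivity

lemma mu_le_one (I : Finset (Finset ι)) : mu I ≤ 1 := by
  unfold mu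
  rw [div_le_one (by positivity)]
  have := Finset.card_le_univ I
  rw [Fintype.card_finset] at this
  exact_mod_cast this

lemma inner_le_four {β : Type} (s : Finset β) (f : β → ℝ) :
    (∑ i ∈ s, f i) ^ 4 ≤ (s.card : ℝ) ^ 3 * ∑ i ∈ s, f i ^ 4 := by
  have h1 := sq_sum_le_card_mul_sum_sq (s := s) (f := f)
  have h2 := sq_sum_le_card_mul_sum_sq (s := s) (f := fun i => f i ^ 2)
  simp_rw [← pow_mul] at h2
  norm_num at h2
  calc (∑ i ∈ s, f i) ^ 4 = ((∑ i ∈ s, f i) ^ 2) ^ 2 := by ring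
    _ ≤ (s.card * ∑ i ∈ s, f i ^ 2) ^ 2 := by gcongr
    _ = (s.card : ℝ) ^ 2 * (∑ i ∈ s, f i ^ 2) ^ 2 := by ring
    _ ≤ (s.card : ℝ) ^ 2 * (s.card * ∑ i ∈ s, f i ^ 4) := by gcongr
    _ = _ := by ring

lemma small_quarter (g : Finset ι → ℝ) (I : Finset (Finset ι))
    (hg : ∀ x, |g x| ≤ if x ∈ I then 1 else 0) :
    (∑ S : Finset ι, (1/4 : ℝ) ^ S.card * hat g S ^ 2) ^ 2 ≤ mu I ^ 3 := by
  set W := ∑ S : Finset ι, (1/4 : ℝ) ^ S.card * hat g S ^ 2 with hW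
  set T : ℝ := 2 ^ Fintype.card ι with hT
  have hT0 : 0 < T := by positivity
  have hW0 : 0 ≤ W := Finset.sum_nonneg fun _ _ => by positivity
  set c : Finset ι → ℝ := fun S => (1/2 : ℝ) ^ S.card * hat g S
  set H : Finset ι → ℝ := fun x => ∑ S : Finset ι, (1/2 : ℝ) ^ S.card * c S * chi S x with hH
  have hq : ∀ S : Finset ι, (1/4 : ℝ) ^ S.card = (1/2 : ℝ) ^ S.card * (1/2 : ℝ) ^ S.card := by
    intro S; rw [← mul_pow]; norm_num
  have hc : ∑ S : Finset ι, c S ^ 2 = W := by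
    refine Finset.sum_congr rfl fun S _ => ?_
    rw [hq]; simp only [c]; ring
  have hb := bonami (Finset.univ : Finset ι) c
  rw [Finset.powerset_univ, hc, Finset.card_univ] at hb
  change ∑ x, H x ^ 4 ≤ T * W ^ 2 at hb
  have hWg : W * T = ∑ x, g x * H x := by
    simp only [hH, Finset.mul_sum]
    rw [Finset.sum_comm, hW, Finset.sum_mul]
    refine Finset.sum_congr rfl fun S _ => ?_
    have : hat g S * T = ∑ x, g x * chi S x := by
      unfold hat; rw [div_mul_cancel₀ _ hT0.ne']
    calc _ = (1/4 : ℝ) ^ S.card * hat g S * (hat g S * T) := by ring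
      _ = _ := by
        rw [this, Finset.mul_sum]
        refine Finset.sum_congr rfl fun x _ => ?_
        rw [hq]; simp only [c]; ring
  have h1 : W * T ≤ ∑ x ∈ I, |H x| := by
    rw [hWg, ← Finset.sum_filter_add_sum_filter_not Finset.univ (· ∈ I)]
    have z : ∑ x with x ∉ I, g x * H x = 0 := by
      apply Finset.sum_eq_zero
      intro x hx
      have := hg x
      rw [if_neg (Finset.mem_filter.1 hx).2] at this
      rw [abs_nonpos_iff.1 this, zero_mul]
    rw [z, add_zero]
    have : Finset.univ.filter (· ∈ I) = I := by ext; simp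
    rw [this]
    apply Finset.sum_le_sum
    intro x hx
    have := hg x
    rw [if_pos hx] at this
    calc _ ≤ |g x * H x| := le_abs_self _
      _ = |g x| * |H x| := abs_mul _ _
      _ ≤ 1 * |H x| := by gcongr
      _ = _ := one_mul _
  have h2 : (∑ x ∈ I, |H x|) ^ 4 ≤ (I.card : ℝ) ^ 3 * ∑ x ∈ I, H x ^ 4 := by
    have h := inner_le_four I (fun x => |H x|)
    refine h.trans (le_of_eq ?_)
    congr 1
    exact Finset.sum_congr rfl fun x _ => by
      rw [show (4 : ℕ) = 2 * 2 from rfl, pow_mul, pow_mul, sq_abs]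
  have h3 : ∑ x ∈ I, H x ^ 4 ≤ T * W ^ 2 :=
    (Finset.sum_le_univ_sum_of_nonneg fun x => by positivity).trans hb
  have h4 : (W * T) ^ 4 ≤ (I.card : ℝ) ^ 3 * (T * W ^ 2) := by
    calc (W * T) ^ 4 ≤ (∑ x ∈ I, |H x|) ^ 4 := by gcongr
      _ ≤ _ := h2
      _ ≤ _ := by gcongr
  rcases hW0.eq_or_lt with h0 | h0
  · rw [← h0]; simpa using pow_nonneg (mu_nonneg I) 3
  · have : W ^ 2 * T ^ 3 ≤ (I.card : ℝ) ^ 3 := by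
      have hp : 0 < T * W ^ 2 := by positivity
      refine le_of_mul_le_mul_right ?_ hp
      calc _ = (W * T) ^ 4 := by ring
        _ ≤ _ := h4
    unfold mu
    rw [div_pow, le_div_iff₀ (by positivity)]
    exact this

/-- the base weight `2^{-1/4}` -/
noncomputable def rr : ℝ := Real.sqrt (Real.sqrt (1/2))

lemma rr_pow_four : rr ^ 4 = 1/2 := by
  unfold rr
  rw [show (4 : ℕ) = 2 * 2 from rfl, pow_mul, Real.sq_sqrt (by positivity),
    Real.sq_sqrt (by positivity)]

lemma rr_pos : 0 < rr := by unfold rr; positivity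

lemma rr_le_one : rr ≤ 1 := by
  by_contra h
  push Not at h
  have := one_lt_pow₀ h (n := 4) (by norm_num)
  rw [rr_pow_four] at this
  norm_num at this

lemma cs_weight {β : Type} (s : Finset β) (w a : β → ℝ) (ha : ∀ i ∈ s, 0 ≤ a i) :
    (∑ i ∈ s, w i * a i) ^ 2 ≤ (∑ i ∈ s, a i) * ∑ i ∈ s, w i ^ 2 * a i := by
  have := Finset.sum_mul_sq_le_sq_mul_sq s (fun i => Real.sqrt (a i))
    (fun i => w i * Real.sqrt (a i))
  have e1 : ∑ i ∈ s, Real.sqrt (a i) * (w i * Real.sqrt (a i)) = ∑ i ∈ s, w i * a i :=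
    Finset.sum_congr rfl fun i hi => by
      rw [mul_left_comm, Real.mul_self_sqrt (ha i hi)]
  have e2 : ∑ i ∈ s, Real.sqrt (a i) ^ 2 = ∑ i ∈ s, a i :=
    Finset.sum_congr rfl fun i hi => Real.sq_sqrt (ha i hi)
  have e3 : ∑ i ∈ s, (w i * Real.sqrt (a i)) ^ 2 = ∑ i ∈ s, w i ^ 2 * a i :=
    Finset.sum_congr rfl fun i hi => by rw [mul_pow, Real.sq_sqrt (ha i hi)]
  rwa [e1, e2, e3] at this

lemma small_rr (g : Finset ι → ℝ) (I : Finset (Finset ι))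
    (hg : ∀ x, |g x| ≤ if x ∈ I then 1 else 0) :
    (∑ S : Finset ι, rr ^ S.card * hat g S ^ 2) ≤ mu I ^ (17/16 : ℝ) := by
  have hm := mu_nonneg I
  have h0 : ∑ S : Finset ι, hat g S ^ 2 ≤ mu I := by
    have := plancherel g g
    simp_rw [← pow_two] at this
    rw [this]
    unfold mu
    gcongr
    have : (I.card : ℝ) = ∑ x, if x ∈ I then (1 : ℝ) else 0 := by simp
    rw [this]
    apply Finset.sum_le_sum
    intro x _
    have := hg x
    rw [← sq_abs]
    split_ifs at * with h
    · exact pow_le_one₀ (abs_nonneg _) this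
    · have h1 : |g x| = 0 := le_antisymm this (abs_nonneg _)
      rw [h1]; norm_num
  have h1 := small_quarter g I hg
  have key : ∀ w : ℝ, 0 ≤ w → (∑ S : Finset ι, w ^ S.card * hat g S ^ 2) ^ 2
      ≤ mu I * ∑ S : Finset ι, (w ^ 2) ^ S.card * hat g S ^ 2 := by
    intro w hw
    have := cs_weight Finset.univ (fun S : Finset ι => w ^ S.card) (fun S => hat g S ^ 2)
      (fun _ _ => sq_nonneg _)
    simp_rw [← pow_mul, mul_comm _ 2, pow_mul] at this
    refine this.trans ?_
    have : 0 ≤ ∑ S : Finset ι, (w ^ 2) ^ S.card * hat g S ^ 2 :=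
      Finset.sum_nonneg fun _ _ => by positivity
    gcongr
  have k1 := key rr rr_pos.le
  have k2 := key (rr ^ 2) (sq_nonneg _)
  have k3 := key ((rr ^ 2) ^ 2) (sq_nonneg _)
  have e : ((rr ^ 2) ^ 2) ^ 2 = 1/4 := by
    have := rr_pow_four
    calc ((rr ^ 2) ^ 2) ^ 2 = (rr ^ 4) ^ 2 := by ring
      _ = _ := by rw [this]; norm_num
  rw [e] at k3
  set V1 := ∑ S : Finset ι, rr ^ S.card * hat g S ^ 2
  set V2 := ∑ S : Finset ι, (rr ^ 2) ^ S.card * hat g S ^ 2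
  set V3 := ∑ S : Finset ι, ((rr ^ 2) ^ 2) ^ S.card * hat g S ^ 2
  set W := ∑ S : Finset ι, (1/4 : ℝ) ^ S.card * hat g S ^ 2
  have hrp := rr_pos
  have hV1 : 0 ≤ V1 := Finset.sum_nonneg fun _ _ => by positivity
  have hV2 : 0 ≤ V2 := Finset.sum_nonneg fun _ _ => by positivity
  have hV3 : 0 ≤ V3 := Finset.sum_nonneg fun _ _ => by positivity
  have hW : 0 ≤ W := Finset.sum_nonneg fun _ _ => by positivity
  have main : V1 ^ 16 ≤ mu I ^ 17 := by
    calc V1 ^ 16 = (V1 ^ 2) ^ 8 := by ring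
      _ ≤ (mu I * V2) ^ 8 := by gcongr
      _ = mu I ^ 8 * (V2 ^ 2) ^ 4 := by ring
      _ ≤ mu I ^ 8 * (mu I * V3) ^ 4 := by gcongr
      _ = mu I ^ 12 * (V3 ^ 2) ^ 2 := by ring
      _ ≤ mu I ^ 12 * (mu I * W) ^ 2 := by gcongr
      _ = mu I ^ 14 * W ^ 2 := by ring
      _ ≤ mu I ^ 14 * mu I ^ 3 := by gcongr
      _ = _ := by ring
  refine le_of_pow_le_pow_left₀ (n := 16) (by norm_num) (by positivity) ?_
  rw [← Real.rpow_natCast (mu I ^ (17/16 : ℝ)), ← Real.rpow_mul hm]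
  norm_num
  exact_mod_cast main

lemma small_rr_compl (g : Finset ι → ℝ) (I : Finset (Finset ι))
    (hg : ∀ x, |g x| ≤ if x ∈ I then 1 else 0) :
    (∑ S : Finset ι, rr ^ (Fintype.card ι - S.card) * hat g S ^ 2) ≤ mu I ^ (17/16 : ℝ) := by
  have h := small_rr (fun x => g x * chi Finset.univ x) I (fun x => by
    rw [abs_mul, abs_chi, mul_one]; exact hg x)
  refine le_trans (le_of_eq ?_) h
  simp_rw [← hat_compl]
  refine Fintype.sum_equiv ⟨compl, compl, compl_compl, compl_compl⟩ _ _ fun S => ?_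
  change _ = rr ^ Sᶜ.card * hat g Sᶜᶜ ^ 2
  rw [Finset.card_compl, compl_compl]

/-- bilinear form bound. -/
lemma bilin_bound (lam : Finset ι → ℝ) (κ : ℝ) (hκ : 0 ≤ κ)
    (hl : ∀ S, |lam S| ≤ κ * (rr ^ S.card + rr ^ (Fintype.card ι - S.card)))
    (g h : Finset ι → ℝ) (I J : Finset (Finset ι))
    (hg : ∀ x, |g x| ≤ if x ∈ I then 1 else 0) (hh : ∀ x, |h x| ≤ if x ∈ J then 1 else 0) :
    |∑ S, hat g S * hat h S * lam S| ≤ 2 * κ * (mu I * mu J) ^ (17/32 : ℝ) := by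
  have hI := mu_nonneg I
  have hJ := mu_nonneg J
  have hrp := rr_pos
  have aux : ∀ w : Finset ι → ℝ, (∀ S, 0 ≤ w S) →
      (∑ S, w S * hat g S ^ 2 ≤ mu I ^ (17/16 : ℝ)) →
      (∑ S, w S * hat h S ^ 2 ≤ mu J ^ (17/16 : ℝ)) →
      ∑ S, w S * (|hat g S| * |hat h S|) ≤ (mu I * mu J) ^ (17/32 : ℝ) := by
    intro w hw h1 h2
    have := Finset.sum_mul_sq_le_sq_mul_sq Finset.univ (fun S => Real.sqrt (w S) * |hat g S|)
      (fun S => Real.sqrt (w S) * |hat h S|)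
    have e0 : ∀ S, Real.sqrt (w S) * |hat g S| * (Real.sqrt (w S) * |hat h S|)
        = w S * (|hat g S| * |hat h S|) := by
      intro S
      rw [mul_mul_mul_comm, Real.mul_self_sqrt (hw S)]
    simp_rw [e0, mul_pow, sq_abs, Real.sq_sqrt (hw _)] at this
    refine le_of_sq_le_sq' ?_ (by positivity)
    refine this.trans ?_
    have e3 : ((mu I * mu J) ^ (17/32 : ℝ)) ^ 2 = mu I ^ (17/16 : ℝ) * mu J ^ (17/16 : ℝ) := by
      rw [← Real.rpow_natCast, ← Real.rpow_mul (by positivity), Real.mul_rpow hI hJ]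
      norm_num
    rw [e3]
    have : 0 ≤ ∑ S, w S * hat h S ^ 2 :=
      Finset.sum_nonneg fun S _ => mul_nonneg (hw S) (sq_nonneg _)
    gcongr
  have a1 := aux (fun S => rr ^ S.card) (fun S => by positivity) (small_rr g I hg) (small_rr h J hh)
  have a2 := aux (fun S => rr ^ (Fintype.card ι - S.card)) (fun S => by positivity)
    (small_rr_compl g I hg) (small_rr_compl h J hh)
  calc |∑ S, hat g S * hat h S * lam S| ≤ ∑ S, |hat g S * hat h S * lam S| :=
        Finset.abs_sum_le_sum_abs _ _
    _ ≤ ∑ S, κ * (rr ^ S.card * (|hat g S| * |hat h S|)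
          + rr ^ (Fintype.card ι - S.card) * (|hat g S| * |hat h S|)) := by
        apply Finset.sum_le_sum
        intro S _
        rw [abs_mul, abs_mul]
        calc _ ≤ |hat g S| * |hat h S| *
              (κ * (rr ^ S.card + rr ^ (Fintype.card ι - S.card))) := by
              gcongr; exact hl S
          _ = _ := by ring
    _ = κ * (∑ S, rr ^ S.card * (|hat g S| * |hat h S|)
          + ∑ S, rr ^ (Fintype.card ι - S.card) * (|hat g S| * |hat h S|)) := by
        rw [← Finset.mul_sum, Finset.sum_add_distrib]
    _ ≤ κ * ((mu I * mu J) ^ (17/32 : ℝ) + (mu I * mu J) ^ (17/32 : ℝ)) := by gcongr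
    _ = _ := by ring

/-- translation-invariant kernels are diagonal in the Walsh basis. -/
lemma kernel_diag (w : Finset ι → ℝ) (g h : Finset ι → ℝ) :
    ∑ x, ∑ y, w (symmDiff x y) * (g x * h y)
      = 2 ^ Fintype.card ι * ∑ S, hat g S * hat h S * ∑ D, w D * chi S D := by
  have e1 : ∀ x, ∑ y, w (symmDiff x y) * (g x * h y)
      = ∑ D, w D * (g x * h (symmDiff x D)) := by
    intro x
    refine Fintype.sum_equiv ⟨symmDiff x, symmDiff x, fun y => ?_, fun y => ?_⟩ _ _ fun y => ?_
    · exact symmDiff_symmDiff_cancel_left x y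
    · exact symmDiff_symmDiff_cancel_left x y
    · change _ = w (symmDiff x y) * (g x * h (symmDiff x (symmDiff x y)))
      rw [symmDiff_symmDiff_cancel_left]
  simp_rw [e1]
  rw [Finset.sum_comm]
  have e2 : ∀ D, ∑ x, w D * (g x * h (symmDiff x D))
      = ∑ S, 2 ^ Fintype.card ι * (hat g S * hat h S * (w D * chi S D)) := by
    intro D
    have : ∀ x, w D * (g x * h (symmDiff x D))
        = ∑ S, w D * hat h S * chi S D * (g x * chi S x) := by
      intro x
      rw [inversion h (symmDiff x D), Finset.mul_sum, Finset.mul_sum]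
      refine Finset.sum_congr rfl fun S _ => ?_
      rw [chi_symmDiff]; ring
    simp_rw [this]
    rw [Finset.sum_comm]
    refine Finset.sum_congr rfl fun S _ => ?_
    rw [← Finset.mul_sum]
    have : ∑ x, g x * chi S x = hat g S * 2 ^ Fintype.card ι := by
      unfold hat; rw [div_mul_cancel₀ _ (by positivity)]
    rw [this]; ring
  simp_rw [e2]
  rw [Finset.sum_comm, Finset.mul_sum]
  refine Finset.sum_congr rfl fun S _ => ?_
  rw [Finset.mul_sum, Finset.mul_sum]

end walsh
end S12

namespace S12
section eigen
open Polynomial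

/-- coefficients of `(1+X)^a (1-X)^b` -/
noncomputable def PP (a b m : ℕ) : ℝ := (((1 + X) ^ a * (1 - X) ^ b : ℝ[X])).coeff m

lemma PP_rec (a b m : ℕ) : PP a (b + 2) (m + 1) = PP (a + 2) b (m + 1) - 4 * PP a b m := by
  unfold PP
  have : ((1 + X) ^ a * (1 - X) ^ (b + 2) : ℝ[X])
      = (1 + X) ^ (a + 2) * (1 - X) ^ b - C 4 * (((1 + X) ^ a * (1 - X) ^ b) * X) := by
    have : (C 4 : ℝ[X]) = 4 := rfl
    rw [this]; ring
  rw [this, coeff_sub, coeff_C_mul, coeff_mul_X]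

/-- super Catalan numbers -/
noncomputable def SC (j k : ℕ) : ℝ :=
  ((2 * j).factorial * (2 * k).factorial : ℝ) / (j.factorial * k.factorial * (j + k).factorial)

lemma SC_rec (j k : ℕ) : SC (j + 1) k = 4 * SC j k - SC j (k + 1) := by
  unfold SC
  have e1 : ((2 * (j + 1)).factorial : ℝ) = (2 * j + 2) * (2 * j + 1) * (2 * j).factorial := by
    rw [show 2 * (j + 1) = 2 * j + 1 + 1 by ring, Nat.factorial_succ, Nat.factorial_succ]
    push_cast; ring
  have e2 : ((2 * (k + 1)).factorial : ℝ) = (2 * k + 2) * (2 * k + 1) * (2 * k).factorial := by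
    rw [show 2 * (k + 1) = 2 * k + 1 + 1 by ring, Nat.factorial_succ, Nat.factorial_succ]
    push_cast; ring
  have e3 : ((j + 1).factorial : ℝ) = (j + 1) * j.factorial := by
    rw [Nat.factorial_succ]; push_cast; ring
  have e4 : ((k + 1).factorial : ℝ) = (k + 1) * k.factorial := by
    rw [Nat.factorial_succ]; push_cast; ring
  have e5 : ((j + k + 1).factorial : ℝ) = (j + k + 1) * (j + k).factorial := by
    rw [Nat.factorial_succ]; push_cast; ring
  rw [e1, e2, e3, e4, show j + 1 + k = j + k + 1 by ring, show j + (k + 1) = j + k + 1 by ring, e5]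
  have : (j.factorial : ℝ) ≠ 0 := by positivity
  have : (k.factorial : ℝ) ≠ 0 := by positivity
  have : ((j + k).factorial : ℝ) ≠ 0 := by positivity
  have : (j + k + 1 : ℝ) ≠ 0 := by positivity
  have : (j + 1 : ℝ) ≠ 0 := by positivity
  have : (k + 1 : ℝ) ≠ 0 := by positivity
  field_simp
  ring

lemma PP_even (j : ℕ) : ∀ k, PP (2 * k) (2 * j) (j + k) = (-1) ^ j * SC j k := by
  induction j with
  | zero =>
    intro k
    unfold PP SC
    simp only [Nat.mul_zero, pow_zero, mul_one, zero_add, Nat.factorial_zero, Nat.cast_one, one_mul]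
    rw [coeff_one_add_X_pow, Nat.choose_eq_factorial_div_factorial (by omega), Nat.cast_div]
    · rw [show 2 * k - k = k by omega]; push_cast; rfl
    · exact Nat.factorial_mul_factorial_dvd_factorial (by omega)
    · positivity
  | succ j ih =>
    intro k
    rw [show 2 * (j + 1) = 2 * j + 2 by ring, show j + 1 + k = j + k + 1 by ring, PP_rec, ih k,
      show 2 * k + 2 = 2 * (k + 1) by ring, show j + k + 1 = j + (k + 1) by ring, ih (k + 1), SC_rec]
    ring

lemma PP_odd (j : ℕ) : ∀ k, PP (2 * k + 1) (2 * j + 1) (j + k + 1) = 0 := by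
  induction j with
  | zero =>
    intro k
    unfold PP
    simp only [Nat.mul_zero, zero_add, pow_one]
    rw [mul_sub, mul_one, coeff_sub, coeff_mul_X, coeff_one_add_X_pow, coeff_one_add_X_pow]
    have : (2 * k + 1).choose (k + 1) = (2 * k + 1).choose k :=
      Nat.choose_symm_of_eq_add (by ring)
    rw [this, sub_self]
  | succ j ih =>
    intro k
    rw [show 2 * (j + 1) + 1 = 2 * j + 1 + 2 by ring, show j + 1 + k + 1 = (j + k + 1) + 1 by ring,
      PP_rec, ih k, show 2 * k + 1 + 2 = 2 * (k + 1) + 1 by ring,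
      show j + k + 1 + 1 = j + (k + 1) + 1 by ring, ih (k + 1)]
    ring

lemma SC_nonneg (j k : ℕ) : 0 ≤ SC j k := by unfold SC; positivity

lemma SC_le (j k : ℕ) :
    SC j k * (j + k).choose j ≤ (2 * (j + k)).choose (j + k) := by
  have h1 : ((j + k).choose j) ^ 2 ≤ (2 * (j + k)).choose (2 * j) := by
    rw [two_mul (j + k), Nat.add_choose_eq (j + k) (j + k) (2 * j)]
    have : ((j, j) : ℕ × ℕ) ∈ Finset.HasAntidiagonal.antidiagonal (2 * j) := by
      rw [Finset.HasAntidiagonal.mem_antidiagonal]; ring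
    have h := Finset.single_le_sum (f := fun ij : ℕ × ℕ => (j + k).choose ij.1 * (j + k).choose ij.2)
      (fun _ _ => Nat.zero_le _) this
    simpa [sq] using h
  have h1' : ((j + k).choose j : ℝ) ^ 2 ≤ (2 * (j + k)).choose (2 * j) := by exact_mod_cast h1
  have e1 : ((j + k).choose j : ℝ) = (j + k).factorial / (j.factorial * k.factorial) := by
    rw [Nat.cast_add_choose]
  have e2 : ((2 * (j + k)).choose (2 * j) : ℝ)
      = (2 * (j + k)).factorial / ((2 * j).factorial * (2 * k).factorial) := by
    rw [mul_add, Nat.cast_add_choose]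
  have e3 : ((2 * (j + k)).choose (j + k) : ℝ)
      = (2 * (j + k)).factorial / ((j + k).factorial * (j + k).factorial) := by
    rw [two_mul (j + k), Nat.cast_add_choose]
  have e4 : SC j k * (2 * (j + k)).choose (2 * j)
      = (2 * (j + k)).choose (j + k) * (j + k).choose j := by
    rw [e1, e2, e3]; unfold SC
    field_simp
  have hc : (0 : ℝ) < (j + k).choose j := by
    exact_mod_cast Nat.choose_pos (by omega)
  refine le_of_mul_le_mul_right ?_ hc
  calc _ = SC j k * ((j + k).choose j : ℝ) ^ 2 := by ring
    _ ≤ SC j k * (2 * (j + k)).choose (2 * j) := by gcongr; exact SC_nonneg j k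
    _ = _ := e4

lemma two_pow_le_choose (b : ℕ) : ∀ a, 2 * b ≤ a → 2 ^ b ≤ a.choose b := by
  induction b with
  | zero => intro a _; simp
  | succ b ih =>
    intro a ha
    obtain ⟨a, rfl⟩ : ∃ c, a = c + 1 := ⟨a - 1, by omega⟩
    have h := Nat.add_one_mul_choose_eq a b
    have h2 := ih a (by omega)
    have h3 : (2 * (b + 1)) * a.choose b ≤ (a + 1).choose (b + 1) * (b + 1) := by
      rw [← h]; exact Nat.mul_le_mul_right _ ha
    have h4 : 2 * a.choose b ≤ (a + 1).choose (b + 1) := by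
      refine Nat.le_of_mul_le_mul_right ?_ (show 0 < b + 1 by omega)
      calc _ = (2 * (b + 1)) * a.choose b := by ring
        _ ≤ _ := h3
    rw [pow_succ]; omega

lemma choose_lower (M j : ℕ) (hj : 1 ≤ j) (hM : 2 * j ≤ M) : M * 2 ^ j ≤ 2 * j * M.choose j := by
  obtain ⟨j, rfl⟩ : ∃ c, j = c + 1 := ⟨j - 1, by omega⟩
  obtain ⟨M, rfl⟩ : ∃ c, M = c + 1 := ⟨M - 1, by omega⟩
  have h := Nat.add_one_mul_choose_eq M j
  have h2 := two_pow_le_choose j M (by omega)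
  calc (M + 1) * 2 ^ (j + 1) = 2 * ((M + 1) * 2 ^ j) := by ring
    _ ≤ 2 * ((M + 1) * M.choose j) := by gcongr
    _ = _ := by rw [h]; ring

lemma sq_le_four_two_pow (j : ℕ) : j ^ 2 ≤ 4 * 2 ^ j := by
  rcases Nat.lt_or_ge j 4 with h | h
  · interval_cases j <;> norm_num
  · have : j ^ 2 ≤ 2 ^ j := by
      induction j, h using Nat.le_induction with
      | base => norm_num
      | succ k hk ih => rw [pow_succ 2]; nlinarith
    omega

lemma j_rr (j : ℕ) : (j : ℝ) * rr ^ (2 * j) ≤ 2 := by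
  have hp := rr_pos
  refine le_of_sq_le_sq' ?_ (by norm_num)
  have h : (j : ℝ) ^ 2 ≤ 4 * 2 ^ j := by exact_mod_cast sq_le_four_two_pow j
  calc ((j : ℝ) * rr ^ (2 * j)) ^ 2 = (j : ℝ) ^ 2 * (rr ^ 4) ^ j := by
        rw [mul_pow, ← pow_mul, ← pow_mul]; congr 2; ring
    _ ≤ (4 * 2 ^ j) * (1/2) ^ j := by rw [rr_pow_four]; gcongr
    _ = 2 ^ 2 := by rw [mul_assoc, ← mul_pow]; norm_num

lemma inv_choose_le (M j : ℕ) (hj : 1 ≤ j) (hM : 2 * j ≤ M) :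
    (M : ℝ) ≤ 4 * rr ^ (2 * j) * M.choose j := by
  have hp := rr_pos
  have h : (M : ℝ) * 2 ^ j ≤ 2 * j * M.choose j := by exact_mod_cast choose_lower M j hj hM
  have e : rr ^ (2 * j) * rr ^ (2 * j) * 2 ^ j = 1 := by
    rw [← pow_add, show 2 * j + 2 * j = 4 * j by ring, pow_mul, rr_pow_four, ← mul_pow]; norm_num
  calc (M : ℝ) = M * 2 ^ j * (rr ^ (2 * j) * rr ^ (2 * j)) := by linear_combination (-(M : ℝ)) * e
    _ ≤ 2 * j * M.choose j * (rr ^ (2 * j) * rr ^ (2 * j)) := by gcongr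
    _ = 2 * (j * rr ^ (2 * j)) * rr ^ (2 * j) * M.choose j := by ring
    _ ≤ 2 * 2 * rr ^ (2 * j) * M.choose j := by gcongr; exact j_rr j
    _ = _ := by ring

lemma inv_choose_le' (j k : ℕ) (hj : 1 ≤ j) (hk : 1 ≤ k) :
    ((j + k : ℕ) : ℝ) ≤ 4 * (rr ^ (2 * j) + rr ^ (2 * k)) * (j + k).choose j := by
  have hp := rr_pos
  rcases le_total j k with h | h
  · refine (inv_choose_le (j + k) j hj (by omega)).trans ?_
    gcongr
    have : 0 < rr ^ (2 * k) := by positivity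
    linarith
  · refine (inv_choose_le (j + k) k hk (by omega)).trans ?_
    rw [show (j + k).choose k = (j + k).choose j from Nat.choose_symm_of_eq_add (by ring)]
    gcongr
    have : 0 < rr ^ (2 * j) := by positivity
    linarith

lemma central_le (n : ℕ) :
    ((2 * (n + 2)).choose (n + 2) : ℝ) ≤ 6 * (2 * n + 2).choose n := by
  have e3 : ((2 * (n + 2)).choose (n + 2) : ℝ)
      = (2 * (n + 2)).factorial / ((n + 2).factorial * (n + 2).factorial) := by
    rw [two_mul (n + 2), Nat.cast_add_choose]
  have e4 : ((2 * n + 2).choose n : ℝ)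
      = (2 * n + 2).factorial / (n.factorial * (n + 2).factorial) := by
    rw [show 2 * n + 2 = n + (n + 2) by ring, Nat.cast_add_choose]
  have e5 : ((2 * (n + 2)).factorial : ℝ) = (2 * n + 4) * (2 * n + 3) * (2 * n + 2).factorial := by
    rw [show 2 * (n + 2) = 2 * n + 2 + 1 + 1 by ring, Nat.factorial_succ, Nat.factorial_succ]
    push_cast; ring
  have e6 : ((n + 2).factorial : ℝ) = (n + 2) * (n + 1) * n.factorial := by
    rw [Nat.factorial_succ, Nat.factorial_succ]
    push_cast; ring
  have : (0 : ℝ) < (2 * n + 2).factorial := by positivity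
  have : (0 : ℝ) < n.factorial := by positivity
  have key : ((2 * (n + 2)).choose (n + 2) : ℝ)
      = ((2 * n + 4) * (2 * n + 3) / ((n + 2) * (n + 1))) * (2 * n + 2).choose n := by
    rw [e3, e4, e5, e6]; field_simp
  rw [key]
  gcongr
  rw [div_le_iff₀ (by positivity)]
  have : (0 : ℝ) ≤ n := by positivity
  nlinarith

/-- eigenvalue bound -/
lemma eigen_bound (n s : ℕ) (hs : s ≤ 2 * n + 2) :
    |(PP (2 * n + 2 - s) s (n + 2) - PP (2 * n + 2 - s) s n) / (2 * n + 2).choose n|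
      ≤ (24 / (n + 2)) * (rr ^ s + rr ^ (2 * n + 2 - s)) := by
  have hp := rr_pos
  have e : PP (2 * n + 2 - s) s (n + 2) - PP (2 * n + 2 - s) s n
      = PP (2 * n + 2 - s + 1) (s + 1) (n + 2) := by
    unfold PP
    have : ((1 + X) ^ (2 * n + 2 - s + 1) * (1 - X) ^ (s + 1) : ℝ[X])
      = (1 + X) ^ (2 * n + 2 - s) * (1 - X) ^ s
        - ((1 + X) ^ (2 * n + 2 - s) * (1 - X) ^ s) * X ^ 2 := by ring
    rw [this, coeff_sub, coeff_mul_X_pow]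
  rw [e]
  have hc : (0 : ℝ) < (2 * n + 2).choose n := by exact_mod_cast Nat.choose_pos (by omega)
  rcases Nat.even_or_odd s with ⟨j, hj⟩ | ⟨j, hj⟩
  · have := PP_odd j (n + 1 - j)
    rw [show 2 * n + 2 - s + 1 = 2 * (n + 1 - j) + 1 by omega, show s + 1 = 2 * j + 1 by omega,
      show n + 2 = j + (n + 1 - j) + 1 by omega, this]
    rw [zero_div, abs_zero]; positivity
  · obtain ⟨k, hk⟩ : ∃ k, n + 2 = (j + 1) + (k + 1) := ⟨n - j, by omega⟩
    have := PP_even (j + 1) (k + 1)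
    rw [show 2 * n + 2 - s + 1 = 2 * (k + 1) by omega, show s + 1 = 2 * (j + 1) by omega,
      hk, this, abs_div, abs_mul, abs_pow, abs_neg, abs_one, one_pow, one_mul,
      abs_of_nonneg (SC_nonneg _ _), abs_of_pos hc, div_le_iff₀ hc]
    have h1 := SC_le (j + 1) (k + 1)
    have h2 := inv_choose_le' (j + 1) (k + 1) (by omega) (by omega)
    have h3 := central_le n
    rw [← hk] at h1 h2
    have hb : (0 : ℝ) < (n + 2).choose (j + 1) := by exact_mod_cast Nat.choose_pos (by omega)
    have hn : (0 : ℝ) < n + 2 := by positivity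
    push_cast at h2
    have h4 : rr ^ (2 * (j + 1)) ≤ rr ^ s := pow_le_pow_of_le_one hp.le rr_le_one (by omega)
    have h5 : rr ^ (2 * (k + 1)) ≤ rr ^ (2 * n + 2 - s) :=
      pow_le_pow_of_le_one hp.le rr_le_one (by omega)
    have h6 : (n + 2 : ℝ) ≤ 4 * (rr ^ s + rr ^ (2 * n + 2 - s)) * (n + 2).choose (j + 1) :=
      h2.trans (by gcongr)
    set R := rr ^ s + rr ^ (2 * n + 2 - s)
    set B : ℝ := (((n + 2).choose (j + 1) : ℕ) : ℝ)
    set c : ℝ := (((2 * n + 2).choose n : ℕ) : ℝ)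
    have h7 : SC (j + 1) (k + 1) * B ≤ 6 * c := h1.trans h3
    refine le_of_mul_le_mul_right ?_ hb
    calc SC (j + 1) (k + 1) * B ≤ 6 * c := h7
      _ = 6 * c / (n + 2) * (n + 2) := by field_simp
      _ ≤ 6 * c / (n + 2) * (4 * R * B) := by gcongr
      _ = _ := by ring

variable {ι : Type} [DecidableEq ι] [Fintype ι]

lemma sum_card_chi (S : Finset ι) (d : ℕ) :
    ∑ D : Finset ι, (if D.card = d then (1 : ℝ) else 0) * chi S D
      = PP (Fintype.card ι - S.card) S.card d := by
  have h : ((1 + X) ^ (Fintype.card ι - S.card) * (1 - X) ^ S.card : ℝ[X])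
      = ∑ D : Finset ι, C (chi S D) * X ^ D.card := by
    have h1 : ∀ D : Finset ι, C (chi S D) * (X : ℝ[X]) ^ D.card = ∏ i ∈ D, (C (sg S i) * X) := by
      intro D
      rw [chi_comm, Finset.prod_mul_distrib, Finset.prod_const]
      unfold chi
      rw [map_prod]
    simp_rw [h1]
    rw [← Finset.powerset_univ, ← Finset.prod_one_add, ← Finset.prod_mul_prod_compl S, mul_comm]
    congr 1
    · rw [Finset.prod_congr rfl (g := fun _ => (1 - X : ℝ[X])), Finset.prod_const]
      intro i hi
      unfold sg; rw [if_pos hi]; simp; ring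
    · rw [Finset.prod_congr rfl (g := fun _ => (1 + X : ℝ[X])), Finset.prod_const,
        Finset.card_compl]
      intro i hi
      unfold sg; rw [if_neg (Finset.mem_compl.1 hi)]; simp
  unfold PP
  rw [h, finsetSum_coeff]
  refine Finset.sum_congr rfl fun D _ => ?_
  rw [coeff_C_mul, coeff_X_pow]
  by_cases hd : D.card = d
  · simp [hd]
  · simp [hd, Ne.symm hd]

/-- the weight of the second difference kernel -/
noncomputable def ww (n : ℕ) (D : Finset (Fin (2 * n + 2))) : ℝ :=
  ((if D.card = n + 2 then (1 : ℝ) else 0) - (if D.card = n then (1 : ℝ) else 0))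
    / (2 * n + 2).choose n

lemma ww_eigen (n : ℕ) (S : Finset (Fin (2 * n + 2))) :
    |∑ D, ww n D * chi S D|
      ≤ (24 / (n + 2)) * (rr ^ S.card + rr ^ (Fintype.card (Fin (2 * n + 2)) - S.card)) := by
  have h := eigen_bound n S.card (by simpa using Finset.card_le_univ S)
  have e : ∑ D, ww n D * chi S D = (PP (2 * n + 2 - S.card) S.card (n + 2)
      - PP (2 * n + 2 - S.card) S.card n) / (2 * n + 2).choose n := by
    have h1 := sum_card_chi S (n + 2)
    have h2 := sum_card_chi S n
    rw [Fintype.card_fin] at h1 h2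
    rw [← h1, ← h2, ← Finset.sum_sub_distrib, Finset.sum_div]
    refine Finset.sum_congr rfl fun D _ => ?_
    unfold ww; ring
  rw [e, Fintype.card_fin]
  exact h

/-- bound for the kernel on rectangles -/
lemma ww_rect (n : ℕ) (I J : Finset (Finset (Fin (2 * n + 2)))) :
    |∑ x ∈ I, ∑ y ∈ J, ww n (symmDiff x y) / 2 ^ (2 * n + 2)|
      ≤ (48 / (n + 2)) * (mu I * mu J) ^ (17/32 : ℝ) := by
  have hb := bilin_bound (fun S => ∑ D, ww n D * chi S D) (24 / (n + 2)) (by positivity)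
    (ww_eigen n) (fun x => if x ∈ I then 1 else 0) (fun x => if x ∈ J then 1 else 0) I J
    (fun x => by split_ifs <;> simp) (fun x => by split_ifs <;> simp)
  have hk := kernel_diag (ww n) (fun x => if x ∈ I then 1 else 0) (fun x => if x ∈ J then 1 else 0)
  rw [Fintype.card_fin] at hk
  have e : ∑ x ∈ I, ∑ y ∈ J, ww n (symmDiff x y) / 2 ^ (2 * n + 2)
      = (∑ x, ∑ y, ww n (symmDiff x y) *
          ((if x ∈ I then (1 : ℝ) else 0) * (if y ∈ J then 1 else 0))) / 2 ^ (2 * n + 2) := by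
    rw [Finset.sum_div, ← Finset.sum_filter_add_sum_filter_not Finset.univ (· ∈ I)]
    rw [Finset.sum_eq_zero (s := Finset.univ.filter (· ∉ I)), add_zero, Finset.filter_univ_mem]
    · refine Finset.sum_congr rfl fun x hx => ?_
      rw [Finset.sum_div, ← Finset.sum_filter_add_sum_filter_not Finset.univ (· ∈ J)]
      rw [Finset.sum_eq_zero (s := Finset.univ.filter (· ∉ J)), add_zero, Finset.filter_univ_mem]
      · exact Finset.sum_congr rfl fun y hy => by simp [hx, hy]
      · intro y hy; simp [(Finset.mem_filter.1 hy).2]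
    · intro x hx; simp [(Finset.mem_filter.1 hx).2]
  rw [e, hk, mul_div_cancel_left₀ _ (by positivity)]
  refine hb.trans (le_of_eq ?_)
  ring

end eigen
end S12

namespace S12
section dyadic

lemma dyadic_lt (N : ℕ) : ∀ p q : ℕ, p < 2 ^ N → q ≤ 2 ^ N →
    (if p < q then (1 : ℝ) else 0)
      = ∑ k ∈ Finset.range (N + 1),
          if Even (p / 2 ^ k) ∧ p / 2 ^ k + 1 = q / 2 ^ k then (1 : ℝ) else 0 := by
  induction N with
  | zero =>
    intro p q hp hq
    have : p = 0 := by simpa using hp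
    subst this
    have : q = 0 ∨ q = 1 := by simp at hq; omega
    rw [Finset.sum_range_one]
    rcases this with rfl | rfl <;> simp
  | succ N ih =>
    intro p q hp hq
    rw [Finset.sum_range_succ']
    have h := ih (p / 2) (q / 2) (by rw [pow_succ] at hp; omega) (by rw [pow_succ] at hq; omega)
    have e : ∀ k a : ℕ, a / 2 ^ (k + 1) = a / 2 / 2 ^ k := by
      intro k a; rw [pow_succ', Nat.div_div_eq_div_mul]
    simp_rw [e]
    rw [← h]
    simp only [pow_zero, Nat.div_one, Nat.even_iff]
    by_cases h1 : p < q <;> by_cases h2 : p / 2 < q / 2 <;> by_cases h3 : p % 2 = 0 ∧ p + 1 = q <;>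
      simp only [h1, h2, h3, if_true, if_false] <;> first | omega | norm_num

variable {ι : Type} [DecidableEq ι] [Fintype ι]

lemma exists_rank {Ω : Type} [Fintype Ω] (α β : Ω → ℝ) :
    ∃ p q : Ω → ℕ, Function.Injective p ∧ (∀ x, p x < Fintype.card Ω) ∧
      (∀ y, q y ≤ Fintype.card Ω) ∧ ∀ x y, α x ≤ β y ↔ p x < q y := by
  classical
  let e := Fintype.equivFin Ω
  let f : Fin (Fintype.card Ω) → ℝ := fun i => α (e.symm i)
  let σ := Tuple.sort f
  have hσ : Monotone (f ∘ σ) := Tuple.monotone_sort f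
  refine ⟨fun x => (σ.symm (e x) : ℕ), fun y => (Finset.univ.filter fun i => f (σ i) ≤ β y).card,
    ?_, fun x => (σ.symm (e x)).2, fun y => ?_, fun x y => ?_⟩
  · intro x x' h
    exact e.injective (σ.symm.injective (Fin.ext h))
  · simpa using Finset.card_le_univ (Finset.univ.filter fun i => f (σ i) ≤ β y)
  · change α x ≤ β y ↔ (σ.symm (e x) : ℕ) < (Finset.univ.filter fun i => f (σ i) ≤ β y).card
    set i := σ.symm (e x) with hi
    have hx : α x = f (σ i) := by simp [f, hi]
    rw [hx]
    constructor
    · intro h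
      have : Finset.Iic i ⊆ Finset.univ.filter fun i => f (σ i) ≤ β y := by
        intro j hj
        simp only [Finset.mem_filter, Finset.mem_univ, true_and]
        exact (hσ (Finset.mem_Iic.1 hj)).trans h
      have := Finset.card_le_card this
      rw [Fin.card_Iic] at this
      omega
    · intro h
      by_contra hc
      have : (Finset.univ.filter fun i => f (σ i) ≤ β y) ⊆ Finset.Iio i := by
        intro j hj
        simp only [Finset.mem_filter, Finset.mem_univ, true_and] at hj
        rw [Finset.mem_Iio]
        by_contra hji
        exact hc ((hσ (not_lt.1 hji)).trans hj)
      have := Finset.card_le_card this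
      rw [Fin.card_Iio] at this
      omega

lemma fibre_bound {Λ : Type} [DecidableEq Λ] (K : Finset ι → Finset ι → ℝ) (κ : ℝ) (hκ : 0 ≤ κ)
    (hK : ∀ I J : Finset (Finset ι), |∑ x ∈ I, ∑ y ∈ J, K x y| ≤ κ * (mu I * mu J) ^ (17/32 : ℝ))
    (I0 : Finset (Finset ι)) (φ ψ : Finset ι → Λ) (B : ℝ) (hB : 0 ≤ B)
    (hfib : ∀ l, mu (I0.filter fun x => φ x = l) ^ (1/32 : ℝ) ≤ B) :
    |∑ x ∈ I0, ∑ y, if φ x = ψ y then K x y else 0| ≤ κ * B := by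
  classical
  set L : Finset Λ := I0.image φ
  have e : ∑ x ∈ I0, ∑ y, (if φ x = ψ y then K x y else 0)
      = ∑ l ∈ L, ∑ x ∈ I0.filter (fun x => φ x = l), ∑ y ∈ Finset.univ.filter (fun y => ψ y = l),
          K x y := by
    rw [← Finset.sum_fiberwise_of_maps_to (s := I0) (t := L) (g := φ)
      (fun x hx => Finset.mem_image_of_mem φ hx)]
    refine Finset.sum_congr rfl fun l _ => Finset.sum_congr rfl fun x hx => ?_
    rw [← Finset.sum_filter]
    refine Finset.sum_congr ?_ fun _ _ => rfl
    ext y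
    rw [(Finset.mem_filter.1 hx).2]
    simp [eq_comm]
  rw [e]
  set I : Λ → Finset (Finset ι) := fun l => I0.filter (fun x => φ x = l)
  set J : Λ → Finset (Finset ι) := fun l => Finset.univ.filter (fun y => ψ y = l)
  have hsum : ∀ (A : Finset (Finset ι)) (f : Finset ι → Λ), 
      ∑ l ∈ L, mu (A.filter fun x => f x = l) ≤ 1 := by
    intro A f
    unfold mu
    rw [← Finset.sum_div, div_le_one (by positivity), ← Nat.cast_sum]
    have : ∑ l ∈ L, (A.filter fun x => f x = l).card ≤ A.card := by
      rw [← Finset.card_biUnion]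
      · apply Finset.card_le_card
        intro x hx
        obtain ⟨l, _, h⟩ := Finset.mem_biUnion.1 hx
        exact (Finset.mem_filter.1 h).1
      · intro a _ b _ hab
        rw [Function.onFun, Finset.disjoint_left]
        intro x hx hx'
        exact hab ((Finset.mem_filter.1 hx).2.symm.trans (Finset.mem_filter.1 hx').2)
    have h2 : A.card ≤ 2 ^ Fintype.card ι := by
      simpa [Fintype.card_finset] using Finset.card_le_univ A
    exact_mod_cast this.trans h2
  have one : ∀ l, (mu (I l) * mu (J l)) ^ (17/32 : ℝ) ≤ B * ((mu (I l) + mu (J l)) / 2) := by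
    intro l
    have ha := mu_nonneg (I l)
    have hb := mu_nonneg (J l)
    rw [Real.mul_rpow ha hb]
    have h1 : mu (I l) ^ (17/32 : ℝ) = mu (I l) ^ (1/32 : ℝ) * Real.sqrt (mu (I l)) := by
      rw [Real.sqrt_eq_rpow, ← Real.rpow_add_of_nonneg ha (by norm_num) (by norm_num)]
      norm_num
    have h2 : mu (J l) ^ (17/32 : ℝ) ≤ Real.sqrt (mu (J l)) := by
      rw [Real.sqrt_eq_rpow]
      exact Real.rpow_le_rpow_of_exponent_ge_of_imp hb (mu_le_one _) (by norm_num) (by norm_num)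
    rw [h1]
    calc mu (I l) ^ (1/32 : ℝ) * Real.sqrt (mu (I l)) * mu (J l) ^ (17/32 : ℝ)
        ≤ B * Real.sqrt (mu (I l)) * Real.sqrt (mu (J l)) := by
          gcongr
          exact hfib l
      _ = B * (Real.sqrt (mu (I l)) * Real.sqrt (mu (J l))) := by ring
      _ ≤ _ := by
          gcongr
          have := sq_nonneg (Real.sqrt (mu (I l)) - Real.sqrt (mu (J l)))
          have s1 := Real.sq_sqrt ha
          have s2 := Real.sq_sqrt hb
          nlinarith
  calc _ ≤ ∑ l ∈ L, |∑ x ∈ I l, ∑ y ∈ J l, K x y| := Finset.abs_sum_le_sum_abs _ _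
    _ ≤ ∑ l ∈ L, κ * (B * ((mu (I l) + mu (J l)) / 2)) := by
        apply Finset.sum_le_sum
        intro l _
        refine (hK _ _).trans ?_
        gcongr
        exact one l
    _ = κ * B * ((∑ l ∈ L, mu (I l) + ∑ l ∈ L, mu (J l)) / 2) := by
        rw [← Finset.sum_add_distrib, Finset.sum_div, Finset.mul_sum]
        exact Finset.sum_congr rfl fun _ _ => by ring
    _ ≤ κ * B * ((1 + 1) / 2) := by
        gcongr
        · exact hsum _ _
        · exact hsum _ _
    _ = _ := by ring

/-- geometric ratio -/
noncomputable def eta (r : ℕ) : ℝ := (1/2 : ℝ) ^ (1 / (32 * r) : ℝ)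

noncomputable def CC (r : ℕ) : ℝ := (1 - eta r)⁻¹ ^ r

lemma eta_pos (r : ℕ) : 0 < eta r := by unfold eta; positivity

lemma eta_lt_one (r : ℕ) (hr : 0 < r) : eta r < 1 := by
  unfold eta
  exact Real.rpow_lt_one (by norm_num) (by norm_num) (by positivity)

lemma eta_pow (r : ℕ) (hr : 0 < r) (a : ℕ) : (eta r ^ a) ^ r = ((1/2 : ℝ) ^ a) ^ (1/32 : ℝ) := by
  unfold eta
  rw [← pow_mul, ← Real.rpow_natCast, ← Real.rpow_natCast, ← Real.rpow_mul (by norm_num),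
    ← Real.rpow_mul (by norm_num)]
  congr 1
  push_cast
  field_simp

lemma geom_le (η : ℝ) (h0 : 0 < η) (h1 : η < 1) (N : ℕ) :
    ∑ k ∈ Finset.range (N + 1), η ^ (N - k) ≤ (1 - η)⁻¹ := by
  have := Finset.sum_range_reflect (fun i => η ^ i) (N + 1)
  simp only [Nat.add_sub_cancel] at this
  rw [this, ← tsum_geometric_of_lt_one h0.le h1]
  exact (summable_geometric_of_lt_one h0.le h1).sum_le_tsum _ (fun i _ => by positivity)

lemma box_bound {Λ : Type} [Fintype Λ] [DecidableEq Λ] [Nonempty Λ]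
    (K : Finset ι → Finset ι → ℝ) (κ : ℝ) (hκ : 0 ≤ κ)
    (hK : ∀ I J : Finset (Finset ι), |∑ x ∈ I, ∑ y ∈ J, K x y| ≤ κ * (mu I * mu J) ^ (17/32 : ℝ))
    (α β : Λ → Finset ι → ℝ) :
    |∑ x, ∑ y, K x y * ∏ l, (if α l x ≤ β l y then (1 : ℝ) else 0)| ≤ κ * CC (Fintype.card Λ) := by
  classical
  set N := Fintype.card ι with hN
  have hr : 0 < Fintype.card Λ := Fintype.card_pos
  have hcard : Fintype.card (Finset ι) = 2 ^ N := Fintype.card_finset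
  choose p q hinj hp hq hpq using fun l => exists_rank (α l) (β l)
  simp_rw [hcard] at hp hq
  have e1 : ∀ x y, ∏ l, (if α l x ≤ β l y then (1 : ℝ) else 0)
      = ∑ k ∈ Fintype.piFinset (fun _ : Λ => Finset.range (N + 1)),
          if (∀ l, Even (p l x / 2 ^ k l)) ∧
            (fun l => p l x / 2 ^ k l + 1) = (fun l => q l y / 2 ^ k l) then (1 : ℝ) else 0 := by
    intro x y
    have : ∀ l, (if α l x ≤ β l y then (1 : ℝ) else 0) = ∑ k ∈ Finset.range (N + 1),
          if Even (p l x / 2 ^ k) ∧ p l x / 2 ^ k + 1 = q l y / 2 ^ k then (1 : ℝ) else 0 := by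
      intro l
      rw [← dyadic_lt N _ _ (hp l x) (hq l y)]
      simp only [hpq]
    simp_rw [this]
    rw [Finset.prod_univ_sum]
    refine Finset.sum_congr rfl fun k _ => ?_
    rw [Finset.prod_ite_zero]
    simp only [Finset.prod_const_one, Finset.mem_univ, true_implies, funext_iff, forall_and]
  have e2 : ∑ x, ∑ y, K x y * ∏ l, (if α l x ≤ β l y then (1 : ℝ) else 0)
      = ∑ k ∈ Fintype.piFinset (fun _ : Λ => Finset.range (N + 1)),
          ∑ x ∈ Finset.univ.filter (fun x => ∀ l, Even (p l x / 2 ^ k l)),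
            ∑ y, if (fun l => p l x / 2 ^ k l + 1) = (fun l => q l y / 2 ^ k l)
              then K x y else 0 := by
    simp_rw [e1, Finset.mul_sum]
    have : ∀ x, ∑ y, ∑ k ∈ Fintype.piFinset (fun _ : Λ => Finset.range (N + 1)),
        K x y * (if (∀ l, Even (p l x / 2 ^ k l)) ∧
            (fun l => p l x / 2 ^ k l + 1) = (fun l => q l y / 2 ^ k l) then (1 : ℝ) else 0)
        = ∑ k ∈ Fintype.piFinset (fun _ : Λ => Finset.range (N + 1)),
          if (∀ l, Even (p l x / 2 ^ k l)) then
          ∑ y, (if (fun l => p l x / 2 ^ k l + 1) = (fun l => q l y / 2 ^ k l)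
              then K x y else 0) else 0 := by
      intro x
      rw [Finset.sum_comm]
      refine Finset.sum_congr rfl fun k _ => ?_
      by_cases h : ∀ l, Even (p l x / 2 ^ k l)
      · simp only [h, implies_true, true_and, if_true, mul_ite, mul_one, mul_zero]
      · simp only [h, false_and, if_false, mul_zero, Finset.sum_const_zero]
    simp_rw [this]
    rw [Finset.sum_comm]
    refine Finset.sum_congr rfl fun k _ => ?_
    rw [Finset.sum_filter]
  rw [e2]
  set η := eta (Fintype.card Λ)
  have hη0 : 0 < η := eta_pos _
  have hη1 : η < 1 := eta_lt_one _ hr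
  calc _ ≤ ∑ k ∈ Fintype.piFinset (fun _ : Λ => Finset.range (N + 1)),
          |∑ x ∈ Finset.univ.filter (fun x => ∀ l, Even (p l x / 2 ^ k l)),
            ∑ y, if (fun l => p l x / 2 ^ k l + 1) = (fun l => q l y / 2 ^ k l)
              then K x y else 0| := Finset.abs_sum_le_sum_abs _ _
    _ ≤ ∑ k ∈ Fintype.piFinset (fun _ : Λ => Finset.range (N + 1)),
          κ * ∏ l, η ^ (N - k l) := by
        apply Finset.sum_le_sum
        intro k hk
        have hkN : ∀ l, k l ≤ N := fun l => by
          have := Fintype.mem_piFinset.1 hk l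
          rw [Finset.mem_range] at this; omega
        refine fibre_bound K κ hκ hK _ _ _ _ (by positivity) fun lam => ?_
        set A := (Finset.univ.filter (fun x => ∀ l, Even (p l x / 2 ^ k l))).filter
          (fun x => (fun l => p l x / 2 ^ k l + 1) = lam)
        have hA : ∀ l, mu A ≤ (1/2) ^ (N - k l) := by
          intro l
          have h1 : A.card ≤ 2 ^ k l := by
            have hsub : A.image (p l) ⊆ Finset.Ico ((lam l - 1) * 2 ^ k l)
                ((lam l - 1) * 2 ^ k l + 2 ^ k l) := by
              intro z hz
              obtain ⟨x, hx, rfl⟩ := Finset.mem_image.1 hz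
              have h := congrFun (Finset.mem_filter.1 hx).2 l
              change p l x / 2 ^ k l + 1 = lam l at h
              have h' : p l x / 2 ^ k l = lam l - 1 := Nat.eq_sub_of_add_eq h
              rw [Finset.mem_Ico, ← h']
              exact ⟨Nat.div_mul_le_self _ _, Nat.lt_div_mul_add (by positivity)⟩
            have := Finset.card_le_card hsub
            rw [Finset.card_image_of_injective _ (hinj l), Nat.card_Ico,
              Nat.add_sub_cancel_left] at this
            exact this
          unfold mu
          rw [div_le_iff₀ (by positivity)]
          have h2 : (A.card : ℝ) ≤ 2 ^ k l := by exact_mod_cast h1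
          refine h2.trans (le_of_eq ?_)
          have : (2 : ℝ) ^ N = 2 ^ (N - k l) * 2 ^ k l := by
            rw [← pow_add, Nat.sub_add_cancel (hkN l)]
          rw [← hN, this, ← mul_assoc, ← mul_pow]; norm_num
        have hmu := mu_nonneg A
        refine le_of_pow_le_pow_left₀ hr.ne' (by positivity) ?_
        rw [← Finset.prod_pow, ← Finset.card_univ, ← Finset.prod_const]
        apply Finset.prod_le_prod
        · intro l _; positivity
        · intro l _
          have := eta_pow (Fintype.card Λ) hr (N - k l)
          rw [Finset.card_univ]
          change (η ^ _) ^ _ = _ at this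
          rw [this]
          exact Real.rpow_le_rpow hmu (hA l) (by norm_num)
    _ = κ * ∏ l : Λ, ∑ k ∈ Finset.range (N + 1), η ^ (N - k) := by
        rw [← Finset.mul_sum, Finset.prod_univ_sum]
    _ ≤ κ * ∏ l : Λ, (1 - η)⁻¹ := by
        gcongr with l _
        exact geom_le η hη0 hη1 N
    _ = _ := by rw [Finset.prod_const, Finset.card_univ]; rfl

end dyadic
end S12

namespace S12
section influence
variable {ι : Type} [DecidableEq ι] [Fintype ι]

/-- linear form on the cube -/
noncomputable def lin (a : ι → ℝ) (x : Finset ι) : ℝ := ∑ i, sg x i * a i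

noncomputable def hs (p c : ℝ) : ℝ := if p ≤ c then 1 else 0

lemma hs_nonneg (p c : ℝ) : 0 ≤ hs p c := by unfold hs; split_ifs <;> norm_num
lemma hs_le_one (p c : ℝ) : hs p c ≤ 1 := by unfold hs; split_ifs <;> norm_num
lemma hs_anti {p q : ℝ} (h : p ≤ q) (c : ℝ) : hs q c ≤ hs p c := by
  unfold hs; split_ifs <;> first | (exfalso; linarith) | norm_num

lemma sg_single (i j : ι) : sg {i} j = if j = i then -1 else 1 := by
  unfold sg; simp

lemma lin_flip (a : ι → ℝ) (x : Finset ι) (i : ι) :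
    lin a (symmDiff x {i}) = lin a x - 2 * (sg x i * a i) := by
  unfold lin
  simp_rw [sg_symmDiff, sg_single]
  rw [eq_sub_iff_add_eq, ← Finset.sum_erase_add _ _ (Finset.mem_univ i),
    ← Finset.sum_erase_add Finset.univ (fun j => sg x j * a j) (Finset.mem_univ i)]
  have : ∑ j ∈ Finset.univ.erase i, sg x j * (if j = i then -1 else 1) * a j
      = ∑ j ∈ Finset.univ.erase i, sg x j * a j := by
    refine Finset.sum_congr rfl fun j hj => ?_
    rw [if_neg (Finset.ne_of_mem_erase hj), mul_one]
  rw [this, if_pos rfl]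
  ring

noncomputable def sgn (r : ℝ) : ℝ := if 0 ≤ r then 1 else -1

lemma sgn_mul_self (r : ℝ) : sgn r * sgn r = 1 := by unfold sgn; split_ifs <;> norm_num

lemma flip_pt (a : ι → ℝ) (c : ℝ) (x : Finset ι) (i : ι) :
    |hs (lin a x) c - hs (lin a x - sg x i * a i) c|
      ≤ -(sgn (a i) * sg x i) * (hs (lin a x) c - hs (lin a (symmDiff x {i})) c) := by
  rw [lin_flip]
  set u := lin a x
  by_cases h0 : 0 ≤ a i <;> by_cases hx : i ∈ x
  · have h1 := hs_anti (show u ≤ u + a i by linarith) c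
    have h2 := hs_anti (show u + a i ≤ u + 2 * a i by linarith) c
    have e1 : u - sg x i * a i = u + a i := by simp [sg, hx]
    have e2 : u - 2 * (sg x i * a i) = u + 2 * a i := by simp [sg, hx]
    rw [e1, e2, abs_of_nonneg (by linarith)]
    simp only [sgn, sg, hx, h0, if_true]; linarith
  · have h1 := hs_anti (show u - a i ≤ u by linarith) c
    have h2 := hs_anti (show u - 2 * a i ≤ u - a i by linarith) c
    have e1 : u - sg x i * a i = u - a i := by simp [sg, hx]
    have e2 : u - 2 * (sg x i * a i) = u - 2 * a i := by simp [sg, hx]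
    rw [e1, e2, abs_of_nonpos (by linarith)]
    simp only [sgn, sg, hx, h0, if_true, if_false]; linarith
  · have h1 := hs_anti (show u + a i ≤ u by linarith) c
    have h2 := hs_anti (show u + 2 * a i ≤ u + a i by linarith) c
    have e1 : u - sg x i * a i = u + a i := by simp [sg, hx]
    have e2 : u - 2 * (sg x i * a i) = u + 2 * a i := by simp [sg, hx]
    rw [e1, e2, abs_of_nonpos (by linarith)]
    simp only [sgn, sg, hx, h0, if_true, if_false]; linarith
  · have h1 := hs_anti (show u ≤ u - a i by linarith) c
    have h2 := hs_anti (show u - a i ≤ u - 2 * a i by linarith) c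
    have e1 : u - sg x i * a i = u - a i := by simp [sg, hx]
    have e2 : u - 2 * (sg x i * a i) = u - 2 * a i := by simp [sg, hx]
    rw [e1, e2, abs_of_nonneg (by linarith)]
    simp only [sgn, sg, hx, h0, if_false]; linarith

lemma sum_symmDiff_right (D : Finset ι) (g : Finset ι → ℝ) :
    ∑ x, g (symmDiff x D) = ∑ x, g x :=
  Fintype.sum_equiv (Equiv.ofBijective (fun x => symmDiff x D)
    (Function.Involutive.bijective fun x => symmDiff_symmDiff_cancel_right _ _)) _ _ fun _ => rfl

lemma sum_sg_sg (i j : ι) :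
    ∑ x : Finset ι, sg x i * sg x j = if i = j then (2 : ℝ) ^ Fintype.card ι else 0 := by
  split_ifs with h
  · subst h; simp [sg_mul_self, Fintype.card_finset]
  · have := sum_symmDiff_right {i} (fun x : Finset ι => sg x i * sg x j)
    simp only [sg_symmDiff, sg_single, if_true, if_neg (Ne.symm h)] at this
    have e : ∀ x : Finset ι, sg x i * -1 * (sg x j * 1) = -(sg x i * sg x j) := fun x => by ring
    simp_rw [e, Finset.sum_neg_distrib] at this
    linarith

lemma influence (a : ι → ℝ) (c : ℝ) :
    ∑ i, ∑ x, |hs (lin a x) c - hs (lin a x - sg x i * a i) c|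
      ≤ 2 * (2 ^ Fintype.card ι * Real.sqrt (Fintype.card ι)) := by
  set T : Finset ι → ℝ := fun x => ∑ i, sgn (a i) * sg x i
  have hT : ∑ x, T x ^ 2 = 2 ^ Fintype.card ι * Fintype.card ι := by
    have : ∀ x, T x ^ 2 = ∑ i, ∑ j, sgn (a i) * sgn (a j) * (sg x i * sg x j) := by
      intro x
      rw [sq, Finset.sum_mul_sum]
      exact Finset.sum_congr rfl fun i _ => Finset.sum_congr rfl fun j _ => by ring
    simp_rw [this]
    rw [Finset.sum_comm]
    have : ∀ i, ∑ x : Finset ι, ∑ j, sgn (a i) * sgn (a j) * (sg x i * sg x j)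
        = (2 : ℝ) ^ Fintype.card ι := by
      intro i
      rw [Finset.sum_comm]
      simp_rw [← Finset.mul_sum, sum_sg_sg]
      simp [sgn_mul_self]
    simp_rw [this]
    simp [mul_comm]
  have hTabs : ∑ x, |T x| ≤ 2 ^ Fintype.card ι * Real.sqrt (Fintype.card ι) := by
    apply le_of_sq_le_sq' _ (by positivity)
    have := sq_sum_le_card_mul_sum_sq (s := (Finset.univ : Finset (Finset ι))) (f := fun x => |T x|)
    simp only [sq_abs, hT, Finset.card_univ, Fintype.card_finset] at this
    refine this.trans (le_of_eq ?_)
    rw [mul_pow, Real.sq_sqrt (by positivity)]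
    push_cast; ring
  calc _ ≤ ∑ i, ∑ x, -(sgn (a i) * sg x i) * (hs (lin a x) c - hs (lin a (symmDiff x {i})) c) :=
        Finset.sum_le_sum fun i _ => Finset.sum_le_sum fun x _ => flip_pt a c x i
    _ = ∑ i, ∑ x, -2 * ((sgn (a i) * sg x i) * hs (lin a x) c) := by
        refine Finset.sum_congr rfl fun i _ => ?_
        have := sum_symmDiff_right {i} (fun x => sgn (a i) * sg x i * hs (lin a x) c)
        simp only [sg_symmDiff, sg_single, if_true] at this
        have e1 : ∀ x, -(sgn (a i) * sg x i) * (hs (lin a x) c - hs (lin a (symmDiff x {i})) c)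
          = -(sgn (a i) * sg x i * hs (lin a x) c)
            - sgn (a i) * (sg x i * -1) * hs (lin a (symmDiff x {i})) c := fun x => by ring
        simp_rw [e1, Finset.sum_sub_distrib, Finset.sum_neg_distrib, this, ← Finset.mul_sum]
        ring
    _ = ∑ x, -2 * (T x * hs (lin a x) c) := by
        rw [Finset.sum_comm]
        refine Finset.sum_congr rfl fun x _ => ?_
        rw [← Finset.mul_sum, Finset.sum_mul]
    _ ≤ ∑ x, 2 * |T x| := by
        refine Finset.sum_le_sum fun x _ => ?_
        have h0 := hs_nonneg (lin a x) c
        have h1 := hs_le_one (lin a x) c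
        have h2 := neg_abs_le (T x)
        have h3 := abs_nonneg (T x)
        nlinarith
    _ ≤ _ := by
        rw [← Finset.mul_sum]; linarith

lemma prod_sub_prod {Λ : Type} (s : Finset Λ) (p q : Λ → ℝ)
    (hp : ∀ l, 0 ≤ p l ∧ p l ≤ 1) (hq : ∀ l, 0 ≤ q l ∧ q l ≤ 1) :
    |∏ l ∈ s, p l - ∏ l ∈ s, q l| ≤ ∑ l ∈ s, |p l - q l| := by
  classical
  induction s using Finset.induction_on with
  | empty => simp
  | insert b s hb ih =>
    rw [Finset.prod_insert hb, Finset.prod_insert hb, Finset.sum_insert hb]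
    have h1 : 0 ≤ ∏ l ∈ s, p l := Finset.prod_nonneg fun l _ => (hp l).1
    have h2 : ∏ l ∈ s, p l ≤ 1 := Finset.prod_le_one (fun l _ => (hp l).1) fun l _ => (hp l).2
    have e : p b * ∏ l ∈ s, p l - q b * ∏ l ∈ s, q l
      = (p b - q b) * ∏ l ∈ s, p l + q b * (∏ l ∈ s, p l - ∏ l ∈ s, q l) := by ring
    rw [e]
    refine (abs_add_le _ _).trans (add_le_add ?_ ?_)
    · rw [abs_mul, abs_of_nonneg h1]
      exact mul_le_of_le_one_right (abs_nonneg _) h2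
    · rw [abs_mul, abs_of_nonneg (hq b).1]
      exact (mul_le_of_le_one_left (abs_nonneg _) (hq b).2).trans ih

lemma influence_box {Λ : Type} [Fintype Λ] (a : Λ → ι → ℝ) (c : Λ → ℝ) :
    |∑ i, ∑ x, (∏ l, hs (lin (a l) x) (c l) - ∏ l, hs (lin (a l) x - sg x i * a l i) (c l))|
      ≤ Fintype.card Λ * (2 * (2 ^ Fintype.card ι * Real.sqrt (Fintype.card ι))) := by
  calc _ ≤ ∑ i, ∑ x, ∑ l, |hs (lin (a l) x) (c l) - hs (lin (a l) x - sg x i * a l i) (c l)| := by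
        refine (Finset.abs_sum_le_sum_abs _ _).trans (Finset.sum_le_sum fun i _ => ?_)
        refine (Finset.abs_sum_le_sum_abs _ _).trans (Finset.sum_le_sum fun x _ => ?_)
        exact prod_sub_prod _ _ _ (fun l => ⟨hs_nonneg _ _, hs_le_one _ _⟩)
          (fun l => ⟨hs_nonneg _ _, hs_le_one _ _⟩)
    _ = ∑ l, ∑ i, ∑ x, |hs (lin (a l) x) (c l) - hs (lin (a l) x - sg x i * a l i) (c l)| := by
        simp_rw [Finset.sum_comm (s := (Finset.univ : Finset (Finset ι))) (t := (Finset.univ : Finset Λ))]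
        rw [Finset.sum_comm]
    _ ≤ ∑ l : Λ, 2 * (2 ^ Fintype.card ι * Real.sqrt (Fintype.card ι)) :=
        Finset.sum_le_sum fun l _ => influence (a l) (c l)
    _ = _ := by simp

end influence
end S12

namespace S12
section meas
variable {d : ℕ} {ι : Type} [DecidableEq ι] [Fintype ι]

lemma map_sgn (F : Measure (Euc d)) (hF : IsSymmMeasure F) (ε : ℝ) (hε : ε = 1 ∨ ε = -1) :
    F.map (fun v => ε • v) = F := by
  rcases hε with rfl | rfl
  · simp
  · simpa [IsSymmMeasure] using hF

lemma map_sum (F : Measure (Euc d)) [IsProbabilityMeasure F] (hF : IsSymmMeasure F)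
    (ε : ι → ℝ) (hε : ∀ i, ε i = 1 ∨ ε i = -1) (U : Finset ι) :
    (Measure.pi fun _ : ι => F).map (fun y => ∑ i ∈ U, ε i • y i) = convPow F U.card := by
  induction U using Finset.induction_on with
  | empty => simp [convPow, Measure.map_const]
  | insert b s hb ih =>
    rw [Finset.card_insert_of_notMem hb]
    have hm : ∀ i : ι, Measurable (fun y : ι → Euc d => ε i • y i) := fun i => by fun_prop
    have hind : ProbabilityTheory.iIndepFun (fun (i : ι) (y : ι → Euc d) => ε i • y i)
        (Measure.pi fun _ : ι => F) :=
      ProbabilityTheory.iIndepFun_pi (X := fun (i : ι) (v : Euc d) => ε i • v)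
        (fun i => by fun_prop)
    have h2 := hind.indepFun_finsetSum_of_notMem hm hb
    have h3 := h2.map_add_eq_map_conv_map (by
      rw [show (∑ j ∈ s, fun y : ι → Euc d => ε j • y j) = fun y => ∑ i ∈ s, ε i • y i from by
        ext1 y; rw [Finset.sum_apply]]
      exact Finset.measurable_sum s fun i _ => hm i) (hm b)
    have e1 : (fun y : ι → Euc d => ∑ i ∈ insert b s, ε i • y i)
        = (∑ j ∈ s, fun y : ι → Euc d => ε j • y j) + fun y => ε b • y b := by
      ext1 y
      rw [Finset.sum_insert hb, Pi.add_apply, Finset.sum_apply, add_comm]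
    have e2 : (∑ j ∈ s, fun y : ι → Euc d => ε j • y j) = fun y => ∑ i ∈ s, ε i • y i := by
      ext1 y; rw [Finset.sum_apply]
    have e3 : (Measure.pi fun _ : ι => F).map (fun y => ε b • y b) = F := by
      have : (fun y : ι → Euc d => ε b • y b) = (fun v => ε b • v) ∘ Function.eval b := rfl
      rw [this, ← Measure.map_map (measurable_const_smul (ε b))
          (show Measurable (Function.eval b : (ι → Euc d) → Euc d) from measurable_pi_apply b),
        (measurePreserving_eval (fun _ : ι => F) b).map_eq, map_sgn F hF _ (hε b)]
    rw [e1, h3, e2, ih, e3]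
    rfl

variable {Λ : Type} [Fintype Λ]

/-- indicator of a box -/
noncomputable def gg (z : Λ → Euc d) (c : Λ → ℝ) (v : Euc d) : ℝ := ∏ l, hs ⟪v, z l⟫ (c l)

lemma gg_meas (z : Λ → Euc d) (c : Λ → ℝ) : Measurable (gg z c) := by
  unfold gg
  refine Finset.measurable_prod _ fun l _ => ?_
  unfold hs
  exact Measurable.ite (measurableSet_le (by fun_prop) measurable_const)
    measurable_const measurable_const

lemma gg_nonneg (z : Λ → Euc d) (c : Λ → ℝ) (v : Euc d) : 0 ≤ gg z c v :=
  Finset.prod_nonneg fun _ _ => hs_nonneg _ _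

lemma gg_le_one (z : Λ → Euc d) (c : Λ → ℝ) (v : Euc d) : gg z c v ≤ 1 :=
  Finset.prod_le_one (fun _ _ => hs_nonneg _ _) fun _ _ => hs_le_one _ _

noncomputable def PV (z : Λ → Euc d) (c : Λ → ℝ) (G : Measure (Euc d)) : ℝ := ∫ v, gg z c v ∂G

lemma box_measure (z : Λ → Euc d) (c : Λ → ℝ) (G : Measure (Euc d)) :
    (G {v | ∀ l, ⟪v, z l⟫ ≤ c l}).toReal = PV z c G := by
  have hms : MeasurableSet {v : Euc d | ∀ l, ⟪v, z l⟫ ≤ c l} := by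
    rw [Set.ofPred_forall]
    exact MeasurableSet.iInter fun l => measurableSet_le (by fun_prop) measurable_const
  have : gg z c = Set.indicator {v : Euc d | ∀ l, ⟪v, z l⟫ ≤ c l} (fun _ => (1 : ℝ)) := by
    ext v
    unfold gg hs
    rw [Finset.prod_ite_zero]
    simp [Set.indicator_apply]
  unfold PV
  rw [this, integral_indicator_const _ hms]
  simp [Measure.real]

lemma gg_integrable (z : Λ → Euc d) (c : Λ → ℝ) {Ω : Type} [MeasurableSpace Ω] (μ : Measure Ω)
    [IsFiniteMeasure μ] (f : Ω → Euc d) (hf : Measurable f) :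
    Integrable (fun w => gg z c (f w)) μ := by
  refine Integrable.of_bound ((gg_meas z c).comp hf).aestronglyMeasurable 1 ?_
  filter_upwards with w
  rw [Real.norm_eq_abs, abs_of_nonneg (gg_nonneg _ _ _)]
  exact gg_le_one _ _ _

lemma sg_cases (x : Finset ι) (i : ι) : sg x i = 1 ∨ sg x i = -1 := by
  unfold sg; split_ifs <;> simp

lemma sum_meas (x U : Finset ι) :
    Measurable (fun y : ι → Euc d => ∑ i ∈ U, sg x i • y i) :=
  Finset.measurable_sum U fun i _ => (measurable_pi_apply i).const_smul (sg x i)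

lemma int_sum (F : Measure (Euc d)) [IsProbabilityMeasure F] (hF : IsSymmMeasure F)
    (z : Λ → Euc d) (c : Λ → ℝ) (x U : Finset ι) :
    ∫ y, gg z c (∑ i ∈ U, sg x i • y i) ∂(Measure.pi fun _ : ι => F)
      = PV z c (convPow F U.card) := by
  unfold PV
  rw [← map_sum F hF (fun i => sg x i) (fun i => sg_cases x i) U,
    integral_map (sum_meas x U).aemeasurable (gg_meas z c).aestronglyMeasurable]

lemma int_sum_integrable (F : Measure (Euc d)) [IsProbabilityMeasure F]
    (z : Λ → Euc d) (c : Λ → ℝ) (x U : Finset ι) :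
    Integrable (fun y : ι → Euc d => gg z c (∑ i ∈ U, sg x i • y i))
      (Measure.pi fun _ : ι => F) :=
  gg_integrable z c _ _ (sum_meas x U)

lemma inner_sum_eq (z : Euc d) (y : ι → Euc d) (x U : Finset ι) :
    (⟪∑ i ∈ U, sg x i • y i, z⟫ : ℝ) = ∑ i ∈ U, sg x i * ⟪y i, z⟫ := by
  rw [sum_inner]
  exact Finset.sum_congr rfl fun i _ => by rw [real_inner_smul_left]

/-- one-step comparison -/
lemma step_one (F : Measure (Euc d)) [IsProbabilityMeasure F] (hF : IsSymmMeasure F)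
    (z : Λ → Euc d) (c : Λ → ℝ) (n : ℕ) :
    |PV z c (convPow F (n + 1)) - PV z c (convPow F n)|
      ≤ 2 * Fintype.card Λ / Real.sqrt ((n + 1 : ℕ) : ℝ) := by
  set π := Measure.pi fun _ : Fin (n + 1) => F
  have hI : ∫ y, ∑ i, ∑ x, (gg z c (∑ j ∈ Finset.univ, sg x j • y j)
        - gg z c (∑ j ∈ Finset.univ.erase i, sg x j • y j)) ∂π
      = (n + 1 : ℕ) * 2 ^ (n + 1) * (PV z c (convPow F (n + 1)) - PV z c (convPow F n)) := by
    have i0 : ∀ (i : Fin (n + 1)) (x : Finset (Fin (n + 1))), Integrable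
        (fun y : Fin (n + 1) → Euc d => gg z c (∑ j ∈ Finset.univ, sg x j • y j)
        - gg z c (∑ j ∈ Finset.univ.erase i, sg x j • y j)) π := fun i x =>
      (int_sum_integrable F z c x _).sub (int_sum_integrable F z c x _)
    rw [integral_finsetSum _ fun i _ => integrable_finsetSum _ fun x _ => i0 i x]
    have : ∀ i : Fin (n + 1), ∫ y, ∑ x, (gg z c (∑ j ∈ Finset.univ, sg x j • y j)
        - gg z c (∑ j ∈ Finset.univ.erase i, sg x j • y j)) ∂π
        = 2 ^ (n + 1) * (PV z c (convPow F (n + 1)) - PV z c (convPow F n)) := by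
      intro i
      rw [integral_finsetSum _ fun x _ => i0 i x]
      have : ∀ x : Finset (Fin (n + 1)), ∫ y, (gg z c (∑ j ∈ Finset.univ, sg x j • y j)
        - gg z c (∑ j ∈ Finset.univ.erase i, sg x j • y j)) ∂π
        = (PV z c (convPow F (n + 1)) - PV z c (convPow F n)) := by
        intro x
        rw [integral_sub (int_sum_integrable F z c x _) (int_sum_integrable F z c x _),
          int_sum F hF, int_sum F hF, Finset.card_erase_of_mem (Finset.mem_univ i)]
        simp
      simp_rw [this]
      simp [Fintype.card_finset]
      ring
    simp_rw [this]
    simp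
    ring
  have hB : ∀ y : Fin (n + 1) → Euc d, ‖∑ i, ∑ x, (gg z c (∑ j ∈ Finset.univ, sg x j • y j)
        - gg z c (∑ j ∈ Finset.univ.erase i, sg x j • y j))‖
        ≤ Fintype.card Λ * (2 * (2 ^ (n + 1) * Real.sqrt ((n + 1 : ℕ) : ℝ))) := by
    intro y
    have := influence_box (fun l i => (⟪y i, z l⟫ : ℝ)) c
    rw [Fintype.card_fin] at this
    rw [Real.norm_eq_abs]
    convert this using 9 with i _ x _
    · unfold gg
      refine Finset.prod_congr rfl fun l _ => ?_
      rw [inner_sum_eq]; rfl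
    · unfold gg
      refine Finset.prod_congr rfl fun l _ => ?_
      rw [inner_sum_eq]
      congr 1
      rw [eq_sub_iff_add_eq, Finset.sum_erase_add _ _ (Finset.mem_univ i)]; rfl
  have := norm_integral_le_of_norm_le_const (μ := π) (Filter.Eventually.of_forall hB)
  rw [hI, probReal_univ, mul_one, Real.norm_eq_abs, abs_mul, abs_of_nonneg (by positivity)] at this
  rw [le_div_iff₀ (by positivity)]
  have hs : Real.sqrt ((n + 1 : ℕ) : ℝ) * Real.sqrt ((n + 1 : ℕ) : ℝ) = ((n + 1 : ℕ) : ℝ) :=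
    Real.mul_self_sqrt (by positivity)
  have hp : 0 < (2 : ℝ) ^ (n + 1) * Real.sqrt ((n + 1 : ℕ) : ℝ) := by positivity
  refine le_of_mul_le_mul_left ?_ hp
  calc _ = Real.sqrt ((n + 1 : ℕ) : ℝ) * Real.sqrt ((n + 1 : ℕ) : ℝ) * 2 ^ (n + 1)
        * |PV z c (convPow F (n + 1)) - PV z c (convPow F n)| := by ring
    _ ≤ Fintype.card Λ * (2 * (2 ^ (n + 1) * Real.sqrt ((n + 1 : ℕ) : ℝ))) := by
        rw [hs]; exact this
    _ = _ := by ring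

lemma half_sum (a : ι → ℝ) (x x' : Finset ι) :
    lin a x + lin a x' = 2 * ∑ i ∈ (symmDiff x x')ᶜ, sg x i * a i := by
  have h : ∀ i, sg x i * a i + sg x' i * a i
      = if i ∈ (symmDiff x x')ᶜ then 2 * (sg x i * a i) else 0 := by
    intro i
    by_cases h1 : i ∈ x <;> by_cases h2 : i ∈ x' <;>
      simp [sg, h1, h2] <;> ring
  unfold lin
  rw [← Finset.sum_add_distrib]
  simp_rw [h]
  rw [Finset.sum_ite_mem, Finset.univ_inter, Finset.mul_sum]

lemma sum_ww (n : ℕ) (A B : ℝ) :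
    ∑ D : Finset (Fin (2 * n + 2)), (((if D.card = n + 2 then A else 0)
      - (if D.card = n then B else 0)) / (2 * n + 2).choose n) = A - B := by
  have hc : ∀ (k : ℕ) (A : ℝ), ∑ D : Finset (Fin (2 * n + 2)), (if D.card = k then A else 0)
      = (2 * n + 2).choose k * A := by
    intro k A
    rw [← Finset.sum_filter, Finset.sum_const, nsmul_eq_mul]
    congr 2
    have := Finset.card_powersetCard k (Finset.univ : Finset (Fin (2 * n + 2)))
    rw [Finset.card_univ, Fintype.card_fin] at this
    rw [← this]
    congr 1
    ext D; simp [Finset.mem_powersetCard]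
  have hsym : (2 * n + 2).choose (n + 2) = (2 * n + 2).choose n := by
    rw [← Nat.choose_symm (show n ≤ 2 * n + 2 by omega)]
    congr 1; omega
  have hpos : (0 : ℝ) < (2 * n + 2).choose n := by
    exact_mod_cast Nat.choose_pos (by omega)
  rw [← Finset.sum_div, Finset.sum_sub_distrib, hc, hc, hsym]
  field_simp

/-- two-step comparison -/
lemma step_two [DecidableEq Λ] [Nonempty Λ] (F : Measure (Euc d)) [IsProbabilityMeasure F]
    (hF : IsSymmMeasure F) (z : Λ → Euc d) (c : Λ → ℝ) (n : ℕ) :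
    |PV z c (convPow F n) - PV z c (convPow F (n + 2))|
      ≤ 48 / (n + 2) * CC (Fintype.card Λ) := by
  set π := Measure.pi fun _ : Fin (2 * n + 2) => F
  have i0 : ∀ (x x' : Finset (Fin (2 * n + 2))), Integrable
      (fun y : Fin (2 * n + 2) → Euc d => ww n (symmDiff x x') / 2 ^ (2 * n + 2) *
        gg z c (∑ j ∈ (symmDiff x x')ᶜ, sg x j • y j)) π := fun x x' =>
    (int_sum_integrable F z c x _).const_mul _
  have hI : ∫ y, ∑ x, ∑ x', ww n (symmDiff x x') / 2 ^ (2 * n + 2) *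
        gg z c (∑ j ∈ (symmDiff x x')ᶜ, sg x j • y j) ∂π
      = PV z c (convPow F n) - PV z c (convPow F (n + 2)) := by
    rw [integral_finsetSum _ fun i _ => integrable_finsetSum _ fun x _ => i0 i x]
    have : ∀ x : Finset (Fin (2 * n + 2)), ∫ y, ∑ x', ww n (symmDiff x x') / 2 ^ (2 * n + 2) *
        gg z c (∑ j ∈ (symmDiff x x')ᶜ, sg x j • y j) ∂π
        = (PV z c (convPow F n) - PV z c (convPow F (n + 2))) / 2 ^ (2 * n + 2) := by
      intro x
      rw [integral_finsetSum _ fun x' _ => i0 x x']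
      rw [← sum_ww n, Finset.sum_div,
        ← sum_symmDiff_right x (fun D => (((if D.card = n + 2 then PV z c (convPow F n) else 0)
      - (if D.card = n then PV z c (convPow F (n + 2)) else 0)) / ((2 * n + 2).choose n : ℝ))
        / 2 ^ (2 * n + 2))]
      refine Finset.sum_congr rfl fun x' _ => ?_
      rw [integral_const_mul, int_sum F hF, symmDiff_comm x' x]
      set D := symmDiff x x'
      rw [Finset.card_compl, Fintype.card_fin]
      unfold ww
      by_cases h1 : D.card = n + 2
      · have h2 : D.card ≠ n := by omega
        have h3 : 2 * n + 2 - D.card = n := by omega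
        rw [if_pos h1, if_neg h2, if_pos h1, if_neg h2, h3]; ring
      · by_cases h2 : D.card = n
        · have h3 : 2 * n + 2 - D.card = n + 2 := by omega
          rw [if_neg h1, if_pos h2, if_neg h1, if_pos h2, h3]; ring
        · rw [if_neg h1, if_neg h2, if_neg h1, if_neg h2]; simp
    simp_rw [this]
    rw [Finset.sum_const, Finset.card_univ, Fintype.card_finset, Fintype.card_fin, nsmul_eq_mul]
    push_cast
    field_simp
  have hB : ∀ y : Fin (2 * n + 2) → Euc d, ‖∑ x, ∑ x', ww n (symmDiff x x') / 2 ^ (2 * n + 2) *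
        gg z c (∑ j ∈ (symmDiff x x')ᶜ, sg x j • y j)‖ ≤ 48 / (n + 2) * CC (Fintype.card Λ) := by
    intro y
    have := box_bound (Λ := Λ) (fun x x' : Finset (Fin (2 * n + 2)) =>
      ww n (symmDiff x x') / 2 ^ (2 * n + 2)) (48 / (n + 2)) (by positivity) (ww_rect n)
      (fun l x => lin (fun i => (⟪y i, z l⟫ : ℝ)) x)
      (fun l x => 2 * c l - lin (fun i => (⟪y i, z l⟫ : ℝ)) x)
    rw [Real.norm_eq_abs]
    refine le_of_eq_of_le ?_ this
    congr 1
    refine Finset.sum_congr rfl fun x _ => Finset.sum_congr rfl fun x' _ => ?_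
    congr 1
    unfold gg
    refine Finset.prod_congr rfl fun l _ => ?_
    rw [inner_sum_eq]
    unfold hs
    have h := half_sum (fun i => (⟪y i, z l⟫ : ℝ)) x x'
    congr 1
    rw [eq_iff_iff]
    constructor <;> intro _ <;> linarith
  have := norm_integral_le_of_norm_le_const (μ := π) (Filter.Eventually.of_forall hB)
  rwa [hI, probReal_univ, mul_one, Real.norm_eq_abs] at this

end meas
end S12

namespace S12
section final

lemma upper_repr {d : ℕ} (b : EReal) (t : Euc d) :
    ∃ (z : Euc d) (c : ℝ), ∀ v : Euc d, ((⟪v, t⟫ : ℝ) : EReal) ≤ b ↔ ⟪v, z⟫ ≤ c := by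
  induction b with
  | bot => exact ⟨0, -1, fun v => by simp⟩
  | coe r => exact ⟨t, r, fun v => by rw [EReal.coe_le_coe_iff]⟩
  | top => exact ⟨0, 0, fun v => by simp⟩

lemma lower_repr {d : ℕ} (a : EReal) (t : Euc d) :
    ∃ (z : Euc d) (c : ℝ), ∀ v : Euc d, a ≤ ((⟪v, t⟫ : ℝ) : EReal) ↔ ⟪v, z⟫ ≤ c := by
  induction a with
  | bot => exact ⟨0, 0, fun v => by simp⟩
  | coe r => exact ⟨-t, -r, fun v => by rw [EReal.coe_le_coe_iff, inner_neg_right, neg_le_neg_iff]⟩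
  | top => exact ⟨0, -1, fun v => by simp⟩

lemma poly_repr {d m : ℕ} (X : Set (Euc d)) (hX : X ∈ polyhedra d m) :
    ∃ (z : Fin m ⊕ Fin m → Euc d) (c : Fin m ⊕ Fin m → ℝ), X = {v | ∀ l, ⟪v, z l⟫ ≤ c l} := by
  obtain ⟨t, a, b, rfl⟩ := hX
  choose z1 c1 h1 using fun j => lower_repr (a j) (t j)
  choose z2 c2 h2 using fun j => upper_repr (b j) (t j)
  refine ⟨Sum.elim z1 z2, Sum.elim c1 c2, ?_⟩
  ext v
  simp only [Set.mem_setOf_eq, Sum.forall, Sum.elim_inl, Sum.elim_inr, h1, h2, forall_and]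

lemma CC_nonneg (r : ℕ) (hr : 0 < r) : 0 ≤ CC r := by
  have := eta_lt_one r hr
  unfold CC
  have : 0 < 1 - eta r := by linarith
  positivity

lemma iter_two {d : ℕ} {Λ : Type} [Fintype Λ] [DecidableEq Λ] [Nonempty Λ]
    (F : Measure (Euc d)) [IsProbabilityMeasure F] (hF : IsSymmMeasure F)
    (z : Λ → Euc d) (c : Λ → ℝ) (n : ℕ) (hn : 0 < n) (j : ℕ) :
    |PV z c (convPow F n) - PV z c (convPow F (n + 2 * j))|
      ≤ j * (48 / n * CC (Fintype.card Λ)) := by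
  have hC := CC_nonneg (Fintype.card Λ) Fintype.card_pos
  have hn' : (0 : ℝ) < n := by exact_mod_cast hn
  induction j with
  | zero => simp
  | succ j ih =>
    have h := step_two F hF z c (n + 2 * j)
    have h2 : (48 : ℝ) / ((n + 2 * j : ℕ) + 2) * CC (Fintype.card Λ)
        ≤ 48 / n * CC (Fintype.card Λ) := by
      gcongr
      push_cast
      linarith [(Nat.cast_nonneg j : (0 : ℝ) ≤ j)]
    have h3 := abs_sub_le (PV z c (convPow F n)) (PV z c (convPow F (n + 2 * j)))
      (PV z c (convPow F (n + 2 * (j + 1))))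
    rw [show n + 2 * (j + 1) = n + 2 * j + 2 by ring] at h3 ⊢
    push_cast
    linarith

lemma main_box {d : ℕ} {Λ : Type} [Fintype Λ] [DecidableEq Λ] [Nonempty Λ]
    (F : Measure (Euc d)) [IsProbabilityMeasure F] (hF : IsSymmMeasure F)
    (z : Λ → Euc d) (c : Λ → ℝ) (n : ℕ) (hn : 0 < n) (k : ℕ) (hk : (k : ℝ) ≤ Real.sqrt n) :
    |PV z c (convPow F n) - PV z c (convPow F (n + k))|
      ≤ (48 * CC (Fintype.card Λ) + 2 * Fintype.card Λ) / Real.sqrt n := by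
  have hC := CC_nonneg (Fintype.card Λ) Fintype.card_pos
  have hn' : (0 : ℝ) < n := by exact_mod_cast hn
  have hs0 : 0 < Real.sqrt n := Real.sqrt_pos.2 hn'
  have hss : Real.sqrt n * Real.sqrt n = n := Real.mul_self_sqrt hn'.le
  have key : ∀ j : ℕ, j ≤ k → (j : ℝ) * (48 / n * CC (Fintype.card Λ))
      ≤ 48 * CC (Fintype.card Λ) / Real.sqrt n := by
    intro j hj
    have hj' : (j : ℝ) ≤ Real.sqrt n := le_trans (by exact_mod_cast hj) hk
    calc (j : ℝ) * (48 / n * CC (Fintype.card Λ))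
        ≤ Real.sqrt n * (48 / n * CC (Fintype.card Λ)) := by gcongr
      _ = 48 * CC (Fintype.card Λ) / Real.sqrt n := by
        nth_rewrite 2 [← hss]
        field_simp
  rw [add_div]
  rcases Nat.even_or_odd' k with ⟨j, rfl | rfl⟩
  · have h1 := iter_two F hF z c n hn j
    have h2 := key j (by omega)
    have : 0 ≤ 2 * (Fintype.card Λ : ℝ) / Real.sqrt n := by positivity
    linarith
  · have h1 := iter_two F hF z c n hn j
    have h2 := key j (by omega)
    have h3 := step_one F hF z c (n + 2 * j)
    have h4 : 2 * (Fintype.card Λ : ℝ) / Real.sqrt ((n + 2 * j + 1 : ℕ) : ℝ)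
        ≤ 2 * Fintype.card Λ / Real.sqrt n := by
      gcongr
      omega
    rw [abs_sub_comm] at h3
    have h5 := abs_sub_le (PV z c (convPow F n)) (PV z c (convPow F (n + 2 * j)))
      (PV z c (convPow F (n + 2 * j + 1)))
    rw [← add_assoc]
    linarith

end final
end S12

theorem stmt12 :
    ∃ C : ℕ → ℝ, (∀ m, 0 < C m) ∧
      ∀ (d m n : ℕ), 0 < d → 0 < m → 0 < n →
        ∀ F : Measure (Euc d), IsProbabilityMeasure F → IsSymmMeasure F →
          ∀ k : ℕ, (k : ℝ) ≤ Real.sqrt n →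
            rhoPoly m (convPow F n) (convPow F (n + k)) ≤ C m / Real.sqrt n := by
  refine ⟨fun m => |48 * S12.CC (m + m) + 2 * ((m + m : ℕ) : ℝ)| + 1, fun m => by positivity, ?_⟩
  intro d m n _ hm hn F hP hF k hk
  have hb : 0 ≤ (|48 * S12.CC (m + m) + 2 * ((m + m : ℕ) : ℝ)| + 1) / Real.sqrt n := by positivity
  unfold rhoPoly
  refine Real.iSup_le (fun X => Real.iSup_le (fun hX => ?_) hb) hb
  obtain ⟨z, c, rfl⟩ := S12.poly_repr X hX
  rw [S12.box_measure, S12.box_measure]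
  have : Nonempty (Fin m ⊕ Fin m) := ⟨Sum.inl ⟨0, hm⟩⟩
  refine (S12.main_box F hF z c n hn k hk).trans ?_
  rw [Fintype.card_sum, Fintype.card_fin]
  gcongr
  exact (le_abs_self _).trans (by linarith)
end

section
/- Let d, m ∈ ℕ, let F = 𝓛(ξ) ∈ 𝔉_d, and let t₁,…,t_m ∈ ℝ^d be such that for each j = 1,…,m the distribution of the random variable ⟨ξ,t_j⟩ is either non-degenerate (i.e., not a Dirac measure) or equal to the Dirac measure at 0. Then there exists a constant C = c(F, t₁,…,t_m) > 0, depending only on F and t₁,…,t_m, such that for every n ∈ ℕ and every X ∈ 𝔛(t₁,…,t_m) one has |F^n{X} − F^{n+1}{X}| ≤ C · n^{−1/2}. -/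
open MeasureTheory RealInnerProductSpace
open scoped ENNReal

instance convPow_prob {d : ℕ} (μ : Measure (Euc d)) [IsProbabilityMeasure μ] (n : ℕ) :
    IsProbabilityMeasure (convPow μ n) := by
  induction n with
  | zero => unfold convPow; infer_instance
  | succ n ih =>
    unfold convPow mconv
    exact Measure.isProbabilityMeasure_map (by fun_prop)

/-- The convolution power is the law of the sum of iid coordinates. -/
theorem convPow_eq_map {d : ℕ} (μ : Measure (Euc d)) [IsProbabilityMeasure μ] (n : ℕ) :
    convPow μ n = (Measure.pi (fun _ : Fin n => μ)).map (fun ω => ∑ i, ω i) := by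
  induction n with
  | zero => simp [convPow, Measure.map_const]
  | succ n ih =>
    have h := measurePreserving_piFinSuccAbove (fun _ : Fin (n + 1) => μ) (Fin.last n)
    have e : (fun ω : Fin (n + 1) → Euc d => ∑ i, ω i) =
        (fun p : Euc d × (Fin n → Euc d) => (∑ i, p.2 i) + p.1) ∘
          (MeasurableEquiv.piFinSuccAbove (fun _ => Euc d) (Fin.last n)) := by
      funext ω
      simp [Fin.sum_univ_castSucc, MeasurableEquiv.piFinSuccAbove, Fin.insertNthEquiv,
        Fin.init]
    rw [e, ← Measure.map_map (by fun_prop) (MeasurableEquiv.measurable _), h.map_eq]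
    unfold convPow mconv
    rw [ih, ← Measure.prod_swap, Measure.map_map (by fun_prop) (by fun_prop)]
    nth_rewrite 1 [← Measure.map_id (μ := μ)]
    rw [Measure.map_prod_map _ _ (by fun_prop) (by fun_prop),
      Measure.map_map (by fun_prop) (by fun_prop)]
    rfl

theorem integral_coord {d : ℕ} (μ : Measure (Euc d)) [IsProbabilityMeasure μ] (n : ℕ)
    (φ w : Euc d → ℝ) (hφm : Measurable φ) (hφ : ∀ x, |φ x| ≤ 1)
    (hwm : Measurable w) (hw : ∀ x, |w x| ≤ 1) (i : Fin (n + 1)) :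
    ∫ ω, φ (∑ k, ω k) * w (ω i) ∂(Measure.pi (fun _ : Fin (n + 1) => μ)) =
      ∫ s, ∫ x, φ (s + x) * w x ∂μ ∂(convPow μ n) := by
  have h := measurePreserving_piFinSuccAbove (fun _ : Fin (n + 1) => μ) i
  have e : (fun ω : Fin (n + 1) → Euc d => φ (∑ k, ω k) * w (ω i)) =
      fun ω => (fun p : Euc d × (Fin n → Euc d) => φ ((∑ k, p.2 k) + p.1) * w p.1)
        (MeasurableEquiv.piFinSuccAbove (fun _ => Euc d) i ω) := by
    funext ω
    simp [Fin.sum_univ_succAbove _ i, MeasurableEquiv.piFinSuccAbove, Fin.insertNthEquiv,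
        Fin.removeNth, add_comm]
  rw [e, h.integral_comp (MeasurableEquiv.measurableEmbedding _)
    (fun p : Euc d × (Fin n → Euc d) => φ ((∑ k, p.2 k) + p.1) * w p.1),
    convPow_eq_map, integral_map (by fun_prop), integral_prod_symm]
  · refine Integrable.of_bound (C := 1) (by fun_prop) (.of_forall fun p => ?_)
    rw [Real.norm_eq_abs, abs_mul]
    exact mul_le_one₀ (hφ _) (abs_nonneg _) (hw _)
  · exact (StronglyMeasurable.integral_prod_right
      (f := fun s x => φ (s + x) * w x) (by
        apply Measurable.stronglyMeasurable; fun_prop)).aestronglyMeasurable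

/-- Smoothing lemma. -/
theorem smoothing {d : ℕ} (μ : Measure (Euc d)) [IsProbabilityMeasure μ] (n : ℕ) (hn : 0 < n)
    (φ w : Euc d → ℝ) (hφm : Measurable φ) (hφ : ∀ x, |φ x| ≤ 1)
    (hwm : Measurable w) (hw : ∀ x, |w x| ≤ 1) (hw0 : ∫ x, w x ∂μ = 0) :
    |∫ s, ∫ x, φ (s + x) * w x ∂μ ∂(convPow μ n)| ≤ 1 / Real.sqrt n := by
  set I := ∫ s, ∫ x, φ (s + x) * w x ∂μ ∂(convPow μ n) with hI
  set P := Measure.pi (fun _ : Fin (n + 1) => μ) with hP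
  set W : (Fin (n + 1) → Euc d) → ℝ := fun ω => ∑ i, w (ω i) with hW
  have hWm : Measurable W := by fun_prop
  have hWb : ∀ ω, |W ω| ≤ n + 1 := fun ω => by
    refine (Finset.abs_sum_le_sum_abs _ _).trans ?_
    refine (Finset.sum_le_sum fun i _ => hw (ω i)).trans ?_
    simp
  have hsum : (n + 1 : ℝ) * I = ∫ ω, φ (∑ k, ω k) * W ω ∂P := by
    have : ∀ ω : Fin (n + 1) → Euc d, φ (∑ k, ω k) * W ω = ∑ i, φ (∑ k, ω k) * w (ω i) :=
      fun ω => Finset.mul_sum _ _ _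
    simp_rw [this]
    rw [integral_finsetSum]
    · simp_rw [hP, integral_coord μ n φ w hφm hφ hwm hw]
      simp [hI]
    · intro i _
      refine Integrable.of_bound (C := 1) (by fun_prop) (.of_forall fun p => ?_)
      rw [Real.norm_eq_abs, abs_mul]
      exact mul_le_one₀ (hφ _) (abs_nonneg _) (hw _)
  have hwL : MemLp w 2 μ := MemLp.of_bound (by fun_prop) 1 (.of_forall hw)
  have hmean : ∫ ω, W ω ∂P = 0 := by
    rw [hW, integral_finsetSum]
    · refine Finset.sum_eq_zero fun i _ => ?_
      rw [hP, integral_comp_eval (μ := fun _ : Fin (n + 1) => μ) (f := w) (by fun_prop), hw0]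
    · intro i _
      exact Integrable.of_bound (C := 1)
        (Measurable.aestronglyMeasurable (by fun_prop)) (.of_forall fun p => hw _)
  have hvar : ∫ ω, W ω ^ 2 ∂P ≤ n + 1 := by
    have h1 := ProbabilityTheory.variance_sum_pi (μ := fun _ : Fin (n + 1) => μ)
      (X := fun _ => w) (fun _ => hwL)
    have h2 : (∑ i, fun ω : Fin (n + 1) → Euc d => w (ω i)) = W := by
      funext ω; simp [hW]
    rw [h2, ProbabilityTheory.variance_of_integral_eq_zero hWm.aemeasurable hmean] at h1
    rw [h1, ProbabilityTheory.variance_of_integral_eq_zero hwm.aemeasurable hw0]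
    have : ∫ x, w x ^ 2 ∂μ ≤ 1 := by
      have := integral_mono (μ := μ) (f := fun x => w x ^ 2) (g := fun _ => (1 : ℝ))
        hwL.integrable_sq (integrable_const _)
        (fun x => by have := hw x; exact (sq_le_one_iff_abs_le_one _).2 this)
      simpa using this
    simp only [Finset.sum_const, Finset.card_univ, Fintype.card_fin, nsmul_eq_mul]
    push_cast
    have : (0 : ℝ) ≤ n := by positivity
    nlinarith
  set r : ℝ := Real.sqrt (n + 1) with hr
  have hr0 : 0 < r := Real.sqrt_pos.2 (by positivity)
  have hr2 : r ^ 2 = n + 1 := Real.sq_sqrt (by positivity)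
  -- pointwise: |φ W| ≤ (W²/r + r)/2
  have hWsq : Integrable (fun ω => W ω ^ 2) P :=
    Integrable.of_bound (C := (n + 1) ^ 2) (by fun_prop) (.of_forall fun p => by
      rw [Real.norm_eq_abs, abs_pow]
      exact pow_le_pow_left₀ (abs_nonneg _) (hWb p) 2)
  have hbd : |∫ ω, φ (∑ k, ω k) * W ω ∂P| ≤ r := by
    calc |∫ ω, φ (∑ k, ω k) * W ω ∂P| ≤ ∫ ω, (W ω ^ 2 * (1 / (2 * r)) + r / 2) ∂P := by
          rw [← Real.norm_eq_abs]
          refine norm_integral_le_of_norm_le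
            ((hWsq.mul_const _).add (integrable_const _)) (.of_forall fun ω => ?_)
          rw [Real.norm_eq_abs, abs_mul]
          have h1 : |φ (∑ k, ω k)| * |W ω| ≤ |W ω| :=
            mul_le_of_le_one_left (abs_nonneg _) (hφ _)
          refine h1.trans ?_
          have h3 : W ω ^ 2 * (1 / (2 * r)) + r / 2 - |W ω| = (|W ω| - r) ^ 2 / (2 * r) := by
            rw [← sq_abs (W ω)]; field_simp; ring
          have : 0 ≤ (|W ω| - r) ^ 2 / (2 * r) := by positivity
          linarith
      _ = (∫ ω, W ω ^ 2 ∂P) * (1 / (2 * r)) + r / 2 := by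
          rw [integral_add (hWsq.mul_const _) (integrable_const _), integral_mul_const]
          simp
      _ ≤ r ^ 2 * (1 / (2 * r)) + r / 2 := by rw [hr2]; gcongr
      _ = r := by field_simp; ring
  rw [← hsum, abs_mul, abs_of_pos (by positivity : (0 : ℝ) < n + 1), ← hr2] at hbd
  have h4 : |I| ≤ 1 / r := by
    rw [le_div_iff₀ hr0]
    nlinarith
  refine h4.trans ?_
  have : 0 < Real.sqrt n := Real.sqrt_pos.2 (by exact_mod_cast hn)
  refine one_div_le_one_div_of_le this (Real.sqrt_le_sqrt (by linarith))

theorem exists_gap (ν : Measure ℝ) [IsProbabilityMeasure ν]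
    (h : ¬ ∃ a : ℝ, ν = Measure.dirac a) :
    ∃ u v : ℝ, u < v ∧ 0 < ν (Set.Iic u) ∧ 0 < ν (Set.Ici v) := by
  have key : ∃ x ∈ ν.support, ∃ y ∈ ν.support, x < y := by
    by_contra hc
    push Not at hc
    obtain ⟨a, ha⟩ := Measure.nonempty_support (IsProbabilityMeasure.ne_zero ν)
    apply h
    refine ⟨a, ?_⟩
    have hs : ν.support ⊆ {a} := fun y hy => le_antisymm (hc a ha y hy) (hc y hy a ha)
    have hae : ∀ᵐ x ∂ν, x = a := by
      filter_upwards [Measure.support_mem_ae (μ := ν)] with x hx using hs hx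
    have h1 : ν.map (fun x => x) = ν.map (fun _ => a) := Measure.map_congr hae
    rw [Measure.map_id', Measure.map_const] at h1
    simpa using h1
  obtain ⟨x, hx, y, hy, hxy⟩ := key
  rw [Measure.mem_support_iff_forall] at hx hy
  exact ⟨x + (y - x) / 3, y - (y - x) / 3, by linarith,
    hx _ (Iic_mem_nhds (by linarith)), hy _ (Ici_mem_nhds (by linarith))⟩

theorem conc_small {d : ℕ} (μ : Measure (Euc d)) [IsProbabilityMeasure μ] (t : Euc d)
    (h : ¬ ∃ a : ℝ, μ.map (fun x => ⟪x, t⟫) = Measure.dirac a) :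
    ∃ δ C : ℝ, 0 < δ ∧ 0 < C ∧ ∀ n : ℕ, 0 < n → ∀ z : ℝ,
      (convPow μ n).real {s | z < ⟪s, t⟫ ∧ ⟪s, t⟫ ≤ z + δ} ≤ C / Real.sqrt n := by
  have hT : Measurable (fun x : Euc d => (⟪x, t⟫ : ℝ)) := by fun_prop
  have : IsProbabilityMeasure (μ.map (fun x => (⟪x, t⟫ : ℝ))) :=
    Measure.isProbabilityMeasure_map hT.aemeasurable
  obtain ⟨u, v, huv, hu, hv⟩ := exists_gap _ h
  rw [Measure.map_apply hT measurableSet_Iic] at hu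
  rw [Measure.map_apply hT measurableSet_Ici] at hv
  set A : Set (Euc d) := (fun x => (⟪x, t⟫ : ℝ)) ⁻¹' Set.Iic u with hA
  set B : Set (Euc d) := (fun x => (⟪x, t⟫ : ℝ)) ⁻¹' Set.Ici v with hB
  have hAm : MeasurableSet A := hT measurableSet_Iic
  have hBm : MeasurableSet B := hT measurableSet_Ici
  set α := μ.real A with hα
  set β := μ.real B with hβ
  have hα0 : 0 < α := ENNReal.toReal_pos hu.ne' (measure_ne_top _ _)
  have hβ0 : 0 < β := ENNReal.toReal_pos hv.ne' (measure_ne_top _ _)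
  have hα1 : α ≤ 1 := measureReal_le_one
  refine ⟨v - u, 1 / (α * β), by linarith, by positivity, fun n hn z => ?_⟩
  -- choose the half-space `⟪·,t⟫ ≤ z + v`
  set c : ℝ := z + v with hc
  let L : ℝ → Set (Euc d) := fun y => {x | (⟪x, t⟫ : ℝ) ≤ y}
  have hLm : ∀ y, MeasurableSet (L y) := fun y => measurableSet_le hT measurable_const
  let φ : Euc d → ℝ := (L c).indicator (fun _ => 1)
  let w : Euc d → ℝ := fun x => A.indicator (fun _ => 1) x - α
  have hφm : Measurable φ := measurable_const.indicator (hLm c)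
  have hwm : Measurable w := (measurable_const.indicator hAm).sub_const _
  have hφ : ∀ x, |φ x| ≤ 1 := fun x => by
    by_cases hx : x ∈ L c <;> simp [φ, hx]
  have hw : ∀ x, |w x| ≤ 1 := fun x => by
    by_cases hx : x ∈ A <;> simp only [w, hx, Set.indicator_of_mem, Set.indicator_of_notMem,
      not_false_eq_true, abs_le] <;> constructor <;> linarith
  have hw0 : ∫ x, w x ∂μ = 0 := by
    simp only [w]
    rw [integral_sub ((integrable_const _).indicator hAm) (integrable_const _),
      integral_indicator_const _ hAm]
    simp [hα]
  have main := smoothing μ n hn φ w hφm hφ hwm hw hw0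
  have hinner : ∀ s : Euc d, ∫ x, φ (s + x) * w x ∂μ =
      μ.real (A ∩ L (c - ⟪s, t⟫)) - α * μ.real (L (c - ⟪s, t⟫)) := fun s => by
    have : ∀ x, φ (s + x) * w x =
        (A ∩ L (c - ⟪s, t⟫)).indicator (fun _ => (1 : ℝ)) x
          - α * (L (c - ⟪s, t⟫)).indicator (fun _ => (1 : ℝ)) x := fun x => by
      have e : s + x ∈ L c ↔ x ∈ L (c - ⟪s, t⟫) := by
        simp only [L, Set.mem_ofPred_eq, inner_add_left]
        constructor <;> intro <;> linarith
      by_cases h1 : x ∈ A <;> by_cases h2 : x ∈ L (c - ⟪s, t⟫) <;>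
        simp [φ, w, Set.indicator, e, h1, h2]
    simp_rw [this]
    rw [integral_sub ((integrable_const _).indicator (hAm.inter (hLm _)))
      (((integrable_const _).indicator (hLm _)).const_mul _), integral_const_mul,
      integral_indicator_const _ (hAm.inter (hLm _)), integral_indicator_const _ (hLm _)]
    simp
  set E : Set (Euc d) := {s | z < ⟪s, t⟫ ∧ ⟪s, t⟫ ≤ z + (v - u)} with hE
  have hEm : MeasurableSet E :=
    (measurableSet_lt measurable_const hT).inter (measurableSet_le hT measurable_const)
  have hlow : ∀ s : Euc d, E.indicator (fun _ => α * β) s ≤ ∫ x, φ (s + x) * w x ∂μ := fun s => by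
    rw [hinner]
    set y : ℝ := c - ⟪s, t⟫ with hy
    have hLB : y < v → μ.real (L y) ≤ 1 - β := fun hyv => by
      rw [← probReal_compl_eq_one_sub hBm]
      refine measureReal_mono (fun x hx => ?_)
      simp only [L, Set.mem_ofPred_eq] at hx
      simp only [hB, Set.mem_compl_iff, Set.mem_preimage, Set.mem_Ici, not_le]
      linarith
    have hL1 : μ.real (L y) ≤ 1 := measureReal_le_one
    have hL0 : 0 ≤ μ.real (L y) := measureReal_nonneg
    rcases lt_or_ge y u with hyu | hyu
    · have hs : s ∉ E := fun hs => by have := hs.2; linarith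
      have : A ∩ L y = L y := Set.inter_eq_right.2 fun x hx => by
        simp only [L, Set.mem_ofPred_eq] at hx
        simp only [hA, Set.mem_preimage, Set.mem_Iic]
        linarith
      rw [Set.indicator_of_notMem hs, this]
      nlinarith
    · have : A ∩ L y = A := Set.inter_eq_left.2 fun x hx => by
        simp only [hA, Set.mem_preimage, Set.mem_Iic] at hx
        simp only [L, Set.mem_ofPred_eq]
        linarith
      rw [this]
      by_cases hs : s ∈ E
      · have := hLB (by have := hs.1; linarith)
        rw [Set.indicator_of_mem hs]
        nlinarith
      · rw [Set.indicator_of_notMem hs]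
        nlinarith
  have hint : Integrable (fun s => ∫ x, φ (s + x) * w x ∂μ) (convPow μ n) := by
    refine Integrable.of_bound (C := 1) ?_ (.of_forall fun s => ?_)
    · exact (StronglyMeasurable.integral_prod_right
        (f := fun s x => φ (s + x) * w x) (by
          apply Measurable.stronglyMeasurable; fun_prop)).aestronglyMeasurable
    · refine (norm_integral_le_of_norm_le_const (C := 1) (.of_forall fun x => ?_)).trans (by simp)
      rw [Real.norm_eq_abs, abs_mul]
      exact mul_le_one₀ (hφ _) (abs_nonneg _) (hw _)
  have h5 := integral_mono ((integrable_const (α * β)).indicator hEm) hint hlow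
  rw [integral_indicator_const _ hEm, smul_eq_mul] at h5
  have h6 := h5.trans ((le_abs_self _).trans main)
  rw [div_div, mul_comm (α * β), ← div_div, le_div_iff₀ (by positivity)]
  exact h6

theorem conc {d : ℕ} (μ : Measure (Euc d)) [IsProbabilityMeasure μ] (t : Euc d)
    (h : ¬ ∃ a : ℝ, μ.map (fun x => ⟪x, t⟫) = Measure.dirac a) (R : ℝ) :
    ∃ C : ℝ, 0 ≤ C ∧ ∀ n : ℕ, 0 < n → ∀ z : ℝ,
      (convPow μ n).real {s | |(⟪s, t⟫ : ℝ) - z| ≤ R} ≤ C / Real.sqrt n := by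
  obtain ⟨δ, C, hδ, hC, hb⟩ := conc_small μ t h
  obtain ⟨N, hN⟩ := exists_nat_gt ((2 * R + δ) / δ)
  rw [div_lt_iff₀ hδ] at hN
  refine ⟨N * C, by positivity, fun n hn z => ?_⟩
  have hsub : {s : Euc d | |(⟪s, t⟫ : ℝ) - z| ≤ R} ⊆
      ⋃ k ∈ Finset.range N, {s | (z - R - δ + k * δ) < ⟪s, t⟫ ∧
        ⟪s, t⟫ ≤ (z - R - δ + k * δ) + δ} := fun s hs => by
    simp only [Set.mem_ofPred_eq, abs_le] at hs
    simp only [Set.mem_iUnion, Set.mem_ofPred_eq, Finset.mem_range, exists_prop]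
    set q : ℝ := (⟪s, t⟫ - (z - R)) / δ with hq
    have hq0 : 0 ≤ q := div_nonneg (by linarith [hs.1]) hδ.le
    have hqe : q * δ = ⟪s, t⟫ - (z - R) := div_mul_cancel₀ _ hδ.ne'
    have h1 := Nat.le_ceil q
    have h2 := Nat.ceil_lt_add_one hq0
    refine ⟨⌈q⌉₊, ?_, ?_, ?_⟩
    · have : (⌈q⌉₊ : ℝ) < N := by
        refine lt_of_mul_lt_mul_right (a := δ) ?_ hδ.le
        nlinarith
      exact_mod_cast this
    · nlinarith
    · nlinarith
  refine (measureReal_mono hsub (measure_ne_top _ _)).trans ?_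
  refine (measureReal_biUnion_finset_le _ _).trans ?_
  refine (Finset.sum_le_sum fun k _ => hb n hn _).trans ?_
  rw [Finset.sum_const, Finset.card_range, nsmul_eq_mul, mul_div_assoc]

theorem stmt13 (d m : ℕ) (F : Measure (Euc d)) (hF : IsProbabilityMeasure F)
    (t : Fin m → Euc d)
    (ht : ∀ j, (¬ ∃ a : ℝ, F.map (fun x => ⟪x, t j⟫) = Measure.dirac a) ∨
      F.map (fun x => ⟪x, t j⟫) = Measure.dirac (0 : ℝ)) :
    ∃ C : ℝ, 0 < C ∧ ∀ n : ℕ, 0 < n → ∀ X ∈ polyhedraOn t,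
      |((convPow F n) X).toReal - ((convPow F (n + 1)) X).toReal| ≤ C / Real.sqrt n := by
  classical
  have hT : ∀ j, Measurable (fun x : Euc d => (⟪x, t j⟫ : ℝ)) := fun j => by fun_prop
  -- the bounded set on which we compare
  let G : ℝ → Set (Euc d) := fun R => {x | ∀ j, |(⟪x, t j⟫ : ℝ)| ≤ R}
  obtain ⟨R, hR⟩ : ∃ R : ℕ, 0 < F (G R) := by
    by_contra hc
    push Not at hc
    have h0 : F (⋃ R : ℕ, G R) = 0 := measure_iUnion_null fun R => le_antisymm (hc R) bot_le
    have h1 : (⋃ R : ℕ, G R) = Set.univ := by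
      refine Set.eq_univ_of_forall fun x => ?_
      obtain ⟨R, hR⟩ := exists_nat_ge (∑ j, |(⟪x, t j⟫ : ℝ)|)
      refine Set.mem_iUnion.2 ⟨R, fun j => le_trans ?_ hR⟩
      exact Finset.single_le_sum (f := fun j => |(⟪x, t j⟫ : ℝ)|)
        (fun i _ => abs_nonneg _) (Finset.mem_univ j)
    rw [h1, measure_univ] at h0
    exact one_ne_zero h0
  let nd : Fin m → Prop := fun j => ¬ ∃ a : ℝ, F.map (fun x => ⟪x, t j⟫) = Measure.dirac a
  let Z : Set (Euc d) := {x | ∀ j, ¬ nd j → (⟪x, t j⟫ : ℝ) = 0}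
  have hGm : MeasurableSet (G R) := by
    have : G R = ⋂ j, {x : Euc d | |(⟪x, t j⟫ : ℝ)| ≤ R} := by
      ext x; simp [G]
    rw [this]
    exact MeasurableSet.iInter fun j => measurableSet_le (by fun_prop) measurable_const
  have hZm : MeasurableSet Z := by
    have : Z = ⋂ j, ⋂ (_ : ¬ nd j), {x : Euc d | (⟪x, t j⟫ : ℝ) = 0} := by
      ext x; simp [Z]
    rw [this]
    exact MeasurableSet.iInter fun j => MeasurableSet.iInter fun _ =>
      measurableSet_eq_fun (hT j) measurable_const
  have hZ : ∀ᵐ x ∂F, x ∈ Z := by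
    have : ∀ j, ∀ᵐ x ∂F, ¬ nd j → (⟪x, t j⟫ : ℝ) = 0 := fun j => by
      by_cases hj : nd j
      · exact .of_forall fun x h => absurd hj h
      · have h0 := (ht j).resolve_left hj
        have h1 : ∀ᵐ y ∂(F.map (fun x => (⟪x, t j⟫ : ℝ))), y = 0 := by
          rw [h0, ae_dirac_eq]; simp
        filter_upwards [ae_of_ae_map (hT j).aemeasurable h1] with x hx _ using hx
    exact ae_all_iff.2 this
  let B := G R ∩ Z
  have hBm : MeasurableSet B := hGm.inter hZm
  have hFB : F B = F (G R) := measure_congr (by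
    filter_upwards [hZ] with x hx
    have : (x ∈ B) = (x ∈ G R) := by simp [B, hx]
    exact this)
  set p := F.real B with hp
  have hp0 : 0 < p := ENNReal.toReal_pos (by rw [hFB]; exact hR.ne') (measure_ne_top _ _)
  have hp1 : p ≤ 1 := measureReal_le_one
  have hconc : ∀ j, ∃ C : ℝ, 0 ≤ C ∧ (nd j → ∀ n : ℕ, 0 < n → ∀ z : ℝ,
      (convPow F n).real {s | |(⟪s, t j⟫ : ℝ) - z| ≤ R} ≤ C / Real.sqrt n) := fun j => by
    by_cases hj : nd j
    · obtain ⟨C, h0, h1⟩ := conc F (t j) hj R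
      exact ⟨C, h0, fun _ => h1⟩
    · exact ⟨0, le_rfl, fun h => absurd h hj⟩
  choose K hK0 hK using hconc
  have hKs : 0 ≤ ∑ j, 2 * K j := Finset.sum_nonneg fun j _ => by have := hK0 j; positivity
  refine ⟨(1 + ∑ j, 2 * K j) / p, by positivity, fun n hn X hX => ?_⟩
  obtain ⟨a, b, rfl⟩ := hX
  set X : Set (Euc d) := {x | ∀ j, a j ≤ ((⟪x, t j⟫ : ℝ) : EReal) ∧
    ((⟪x, t j⟫ : ℝ) : EReal) ≤ b j} with hXdef
  have hXm : MeasurableSet X := by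
    have : X = ⋂ j, {x : Euc d | a j ≤ ((⟪x, t j⟫ : ℝ) : EReal) ∧
        ((⟪x, t j⟫ : ℝ) : EReal) ≤ b j} := by
      ext x; simp [X]
    rw [this]
    refine MeasurableSet.iInter fun j => MeasurableSet.inter ?_ ?_
    · exact measurableSet_le measurable_const (hT j).coe_real_ereal
    · exact measurableSet_le (hT j).coe_real_ereal measurable_const
  -- the bad set
  let S : Fin m → Set (Euc d) := fun j =>
    {s | |(⟪s, t j⟫ : ℝ) - (a j).toReal| ≤ R} ∪ {s | |(⟪s, t j⟫ : ℝ) - (b j).toReal| ≤ R}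
  let J : Finset (Fin m) := Finset.univ.filter nd
  let U : Set (Euc d) := ⋃ j ∈ J, S j
  have hUm : MeasurableSet U := Finset.measurableSet_biUnion _ fun j _ =>
    (measurableSet_le (by fun_prop) measurable_const).union
      (measurableSet_le (by fun_prop) measurable_const)
  have hU : (convPow F n).real U ≤ (∑ j, 2 * K j) / Real.sqrt n := by
    refine (measureReal_biUnion_finset_le _ _).trans ?_
    rw [Finset.sum_div]
    refine (Finset.sum_le_sum (g := fun j => 2 * K j / Real.sqrt n) fun j hj => ?_).trans ?_
    · have hj' : nd j := (Finset.mem_filter.1 hj).2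
      refine (measureReal_union_le _ _).trans ?_
      have h1 := hK j hj' n hn (a j).toReal
      have h2 := hK j hj' n hn (b j).toReal
      rw [mul_div_assoc]
      linarith
    · exact Finset.sum_le_sum_of_subset_of_nonneg (Finset.subset_univ _)
        fun j _ _ => by have := hK0 j; positivity
  have hgood : ∀ s x, x ∈ B → s ∉ U → (s + x ∈ X ↔ s ∈ X) := fun s x hx hs => by
    simp only [hXdef, Set.mem_ofPred_eq]
    refine forall_congr' fun j => ?_
    rw [inner_add_left]
    by_cases hj : nd j
    · have hxj : |(⟪x, t j⟫ : ℝ)| ≤ R := hx.1 j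
      have hsj : s ∉ S j := fun h => hs (Set.mem_biUnion (by simp [J, hj]) h)
      simp only [S, Set.mem_union, Set.mem_ofPred_eq, not_or, not_le] at hsj
      obtain ⟨ha, hb⟩ := hsj
      generalize a j = aj at ha ⊢
      generalize b j = bj at hb ⊢
      rw [abs_le] at hxj
      refine and_congr ?_ ?_
      · induction aj with
        | bot => simp
        | top => simp [-EReal.coe_add]
        | coe r =>
          rw [EReal.coe_le_coe_iff, EReal.coe_le_coe_iff]
          rw [EReal.toReal_coe, lt_abs] at ha
          constructor <;> intro h <;> rcases ha with ha | ha <;> linarith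
      · induction bj with
        | bot => simp
        | top => simp
        | coe r =>
          rw [EReal.coe_le_coe_iff, EReal.coe_le_coe_iff]
          rw [EReal.toReal_coe, lt_abs] at hb
          constructor <;> intro h <;> rcases hb with hb | hb <;> linarith
    · have : (⟪x, t j⟫ : ℝ) = 0 := hx.2 j hj
      rw [this, add_zero]
  let φ : Euc d → ℝ := X.indicator (fun _ => 1)
  let iB : Euc d → ℝ := B.indicator (fun _ => 1)
  let w : Euc d → ℝ := fun x => p - iB x
  have hφm : Measurable φ := measurable_const.indicator hXm
  have hBi : Measurable iB := measurable_const.indicator hBm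
  have hwm : Measurable w := hBi.const_sub _
  have hφ : ∀ x, |φ x| ≤ 1 := fun x => by
    by_cases hx : x ∈ X <;> simp [φ, hx]
  have hiB : ∀ x, |iB x| ≤ 1 := fun x => by
    by_cases hx : x ∈ B <;> simp [iB, hx]
  have hw : ∀ x, |w x| ≤ 1 := fun x => by
    by_cases hx : x ∈ B <;> simp only [w, iB, hx, Set.indicator_of_mem, Set.indicator_of_notMem,
      not_false_eq_true, abs_le] <;> constructor <;> linarith
  have hiB1 : ∫ x, iB x ∂F = p := by
    simp only [iB]
    rw [integral_indicator_const _ hBm]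
    simp [hp]
  have hw0 : ∫ x, w x ∂F = 0 := by
    simp only [w]
    rw [integral_sub (integrable_const _) ((integrable_const _).indicator hBm), hiB1]
    simp
  have main := smoothing F n hn φ w hφm hφ hwm hw hw0
  -- rewriting the two measures as integrals
  have hn1 : ((convPow F (n + 1)) X).toReal = ∫ s, ∫ x, φ (s + x) ∂F ∂(convPow F n) := by
    have h1 : ∫ y, φ y ∂(convPow F (n + 1)) = ((convPow F (n + 1)) X).toReal := by
      simp only [φ]
      rw [integral_indicator_const _ hXm]; simp [Measure.real]
    rw [← h1]
    have h2 : convPow F (n + 1) = ((convPow F n).prod F).map (fun p => p.1 + p.2) := rfl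
    rw [h2, integral_map (by fun_prop) (by fun_prop), integral_prod]
    exact Integrable.of_bound (C := 1) (Measurable.aestronglyMeasurable (by fun_prop))
      (.of_forall fun q => hφ _)
  have hn0 : ((convPow F n) X).toReal = ∫ s, φ s ∂(convPow F n) := by
    simp only [φ]
    rw [integral_indicator_const _ hXm]; simp [Measure.real]
  have i1 : ∀ s, Integrable (fun x => φ (s + x)) F := fun s =>
    Integrable.of_bound (C := 1) (Measurable.aestronglyMeasurable (by fun_prop))
      (.of_forall fun q => hφ _)
  have hmulb : ∀ s x, ‖φ (s + x) * w x‖ ≤ 1 := fun s x => by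
    rw [Real.norm_eq_abs, abs_mul]
    exact mul_le_one₀ (hφ _) (abs_nonneg _) (hw _)
  have i2 : ∀ s, Integrable (fun x => φ (s + x) * w x) F := fun s =>
    Integrable.of_bound (C := 1) (Measurable.aestronglyMeasurable (by fun_prop))
      (.of_forall fun q => hmulb s q)
  have i3 : ∀ s, Integrable (fun x => φ s * iB x) F := fun s =>
    Integrable.const_mul ((integrable_const _).indicator hBm) _
  have o1 : Integrable (fun s => ∫ x, φ (s + x) ∂F) (convPow F n) := by
    refine Integrable.of_bound (C := 1) ?_ (.of_forall fun s => ?_)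
    · exact (StronglyMeasurable.integral_prod_right
        (f := fun s x => φ (s + x)) (by
          apply Measurable.stronglyMeasurable; fun_prop)).aestronglyMeasurable
    · exact (norm_integral_le_of_norm_le_const (C := 1)
        (.of_forall fun x => hφ _)).trans (by simp)
  have o2 : Integrable (fun s => ∫ x, φ (s + x) * w x ∂F) (convPow F n) := by
    refine Integrable.of_bound (C := 1) ?_ (.of_forall fun s => ?_)
    · exact (StronglyMeasurable.integral_prod_right
        (f := fun s x => φ (s + x) * w x) (by
          apply Measurable.stronglyMeasurable; fun_prop)).aestronglyMeasurable
    · exact (norm_integral_le_of_norm_le_const (C := 1)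
        (.of_forall fun x => hmulb s x)).trans (by simp)
  have o3 : Integrable φ (convPow F n) :=
    Integrable.of_bound (C := 1) (by fun_prop) (.of_forall fun q => hφ _)
  have hpt : ∀ s, |p * (∫ x, φ (s + x) ∂F) - p * φ s - ∫ x, φ (s + x) * w x ∂F|
      ≤ U.indicator (fun _ => (1 : ℝ)) s := fun s => by
    have e : p * (∫ x, φ (s + x) ∂F) - p * φ s - ∫ x, φ (s + x) * w x ∂F
        = ∫ x, (p * φ (s + x) - φ s * iB x - φ (s + x) * w x) ∂F := by
      rw [integral_sub (f := fun x => p * φ (s + x) - φ s * iB x)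
          (((i1 s).const_mul p).sub (i3 s)) (i2 s),
        integral_sub ((i1 s).const_mul p) (i3 s), integral_const_mul, integral_const_mul, hiB1]
      ring
    rw [e, ← Real.norm_eq_abs]
    refine (norm_integral_le_of_norm_le_const (C := U.indicator (fun _ => (1 : ℝ)) s)
      (.of_forall fun x => ?_)).trans (by simp)
    have e2 : p * φ (s + x) - φ s * iB x - φ (s + x) * w x = iB x * (φ (s + x) - φ s) := by
      simp only [w]; ring
    rw [e2, Real.norm_eq_abs]
    by_cases hx : x ∈ B
    · by_cases hs : s ∈ U
      · by_cases h1 : s + x ∈ X <;> by_cases h2 : s ∈ X <;> simp [iB, φ, hx, hs, h1, h2]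
      · have := hgood s x hx hs
        by_cases h2 : s ∈ X <;> simp [iB, φ, hx, hs, this, h2]
    · simp only [iB, hx, not_false_eq_true, Set.indicator_of_notMem, zero_mul, abs_zero]
      exact Set.indicator_nonneg (fun _ _ => zero_le_one) _
  have htot : |p * ((convPow F (n + 1)) X).toReal - p * ((convPow F n) X).toReal
      - ∫ s, ∫ x, φ (s + x) * w x ∂F ∂(convPow F n)| ≤ (convPow F n).real U := by
    have e : p * ((convPow F (n + 1)) X).toReal - p * ((convPow F n) X).toReal
        - ∫ s, ∫ x, φ (s + x) * w x ∂F ∂(convPow F n) =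
        ∫ s, (p * (∫ x, φ (s + x) ∂F) - p * φ s - ∫ x, φ (s + x) * w x ∂F) ∂(convPow F n) := by
      rw [integral_sub (f := fun s => p * (∫ x, φ (s + x) ∂F) - p * φ s)
          ((o1.const_mul p).sub (o3.const_mul p)) o2,
        integral_sub (o1.const_mul p) (o3.const_mul p), integral_const_mul, integral_const_mul,
        hn1, hn0]
    rw [e, ← Real.norm_eq_abs]
    refine (norm_integral_le_of_norm_le ((integrable_const (1 : ℝ)).indicator hUm)
      (.of_forall hpt)).trans ?_
    rw [integral_indicator_const _ hUm]
    simp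
  have hfin : p * |((convPow F n) X).toReal - ((convPow F (n + 1)) X).toReal| ≤
      (1 + ∑ j, 2 * K j) / Real.sqrt n := by
    rw [abs_sub_comm]
    nth_rewrite 1 [← abs_of_pos hp0]
    rw [← abs_mul, mul_sub, add_div]
    have h1 := abs_le.1 main
    have h2 := abs_le.1 htot
    rw [abs_le]
    constructor <;> linarith [h1.1, h1.2, h2.1, h2.2]
  rw [div_right_comm, le_div_iff₀ hp0, mul_comm]
  exact hfin
end
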